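/- arXiv:2603.00815 — 4 statements merged into one kernel-verified Lean document; each statement's English description precedes it below -/
import Mathlib

section
/- Let n ≥ 1, m > n, and let p ∈ P^log(ℝ^n) be a measurable exponent with 2 ≤ p⁻ ≤ p⁺ < ∞ and p⁺ = p_∞. Define ϑ : (0,∞) → ℝ by ϑ(t) = (2/p⁻ − 1/p_∞)·((2 + p_∞(1 − 2/p⁻))/(1 + p_∞(1 − 2/p⁻)) − 1/(p_∞ − 1)) for 0 < t ≤ 1, and ϑ(t) = (1/p_∞)·(p_∞(1 − 2/p⁻)/(1 + p_∞(1 − 2/p⁻)) + 1/(p_∞ − 1)) for t > 1. Then there exists a constant C > 0, depending only on p, m and n, such that for every t > 0 and every f ∈ L^{p(·)/2}(ℝ^n), ‖η_{t,m} * f‖_{L^{p(·)}(ℝ^n)} ≤ C t^{−nϑ(t)} ‖f‖_{L^{p(·)/2}(ℝ^n)}. -/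
open MeasureTheory Filter Real
open scoped ENNReal

noncomputable section

/-- Euclidean space `ℝⁿ`. -/
abbrev Esp (n : ℕ) := EuclideanSpace ℝ (Fin n)

/-- The variable exponent modular `ρ_{p(·)}(f) = ∫_{ℝⁿ} |f(x)|^{p(x)} dx`. -/
def vMod (n : ℕ) (p : Esp n → ℝ) (f : Esp n → ℝ) : ℝ≥0∞ :=
  ∫⁻ x, (ENNReal.ofReal |f x|) ^ (p x) ∂volume

/-- The Luxemburg norm `‖f‖_{L^{p(·)}} = inf {λ > 0 : ρ_{p(·)}(f/λ) ≤ 1}`. -/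
def luxNorm (n : ℕ) (p : Esp n → ℝ) (f : Esp n → ℝ) : ℝ :=
  sInf {lam : ℝ | 0 < lam ∧ vMod n p (fun x => f x / lam) ≤ 1}

/-- Membership in the variable exponent Lebesgue space `L^{p(·)}(ℝⁿ)`. -/
def MemVLp (n : ℕ) (p : Esp n → ℝ) (f : Esp n → ℝ) : Prop :=
  AEMeasurable f volume ∧ ∃ lam : ℝ, 0 < lam ∧ vMod n p (fun x => f x / lam) ≤ 1

/-- Global log-Hölder continuity of `1/p` with decay value `l` (representing `l = 1/p_∞`). -/
def IsLogHolder (n : ℕ) (p : Esp n → ℝ) (l : ℝ) : Prop :=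
  ∃ c : ℝ, 0 < c ∧
    (∀ x y : Esp n, |1 / p x - 1 / p y| ≤ c / Real.log (Real.exp 1 + 1 / ‖x - y‖)) ∧
    (∀ x : Esp n, |1 / p x - l| ≤ c / Real.log (Real.exp 1 + ‖x‖))

/-- The kernel `η_{t,m}(x) = t^{-n} (1 + |x|/t)^{-m}`. -/
def etaKer (n : ℕ) (t m : ℝ) (x : Esp n) : ℝ :=
  t ^ (-(n : ℝ)) * (1 + ‖x‖ / t) ^ (-m)

/-- Convolution `(u * v)(x) = ∫ u(x - y) v(y) dy`. -/
def convR (n : ℕ) (u v : Esp n → ℝ) (x : Esp n) : ℝ :=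
  ∫ y, u (x - y) * v y ∂volume

/-- The kernel as an extended nonnegative function. -/
def kerE (n : ℕ) (t m : ℝ) (z : Esp n) : ℝ≥0∞ := ENNReal.ofReal (etaKer n t m z)

lemma kerE_meas (n : ℕ) (t m : ℝ) : Measurable (kerE n t m) := by
  unfold kerE etaKer
  fun_prop

lemma kerE_meas2 (n : ℕ) (t m : ℝ) :
    Measurable (fun z : Esp n × Esp n => kerE n t m (z.1 - z.2)) :=
  (kerE_meas n t m).comp (measurable_fst.sub measurable_snd)

lemma kerE_bound (n : ℕ) (m : ℝ) (hm : (n : ℝ) < m) :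
    ∃ K : ℝ≥0∞, K ≠ ∞ ∧ ∀ t : ℝ, 0 < t → ∫⁻ z, kerE n t m z ≤ K := by
  have hfin := finite_integral_one_add_norm (E := Esp n) (μ := volume) (r := m)
    (by simpa using hm)
  refine ⟨_, hfin.ne, fun t ht => le_of_eq ?_⟩
  have h1 : ∫⁻ z, kerE n t m z ∂(Measure.map (t • ·) (volume : Measure (Esp n)))
      = ∫⁻ z, kerE n t m (t • z) := by
    rw [lintegral_map (kerE_meas n t m) (measurable_const_smul t)]
  rw [Measure.map_addHaar_smul _ ht.ne', lintegral_smul_measure] at h1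
  have h2 : ∀ z : Esp n, kerE n t m (t • z) =
      ENNReal.ofReal (t ^ (-(n:ℝ))) * ENNReal.ofReal ((1 + ‖z‖) ^ (-m)) := by
    intro z
    unfold kerE etaKer
    rw [← ENNReal.ofReal_mul (by positivity), norm_smul, Real.norm_of_nonneg ht.le,
      mul_div_cancel_left₀ _ ht.ne']
  simp_rw [h2] at h1
  rw [lintegral_const_mul _ (by fun_prop)] at h1
  have h3 : |(t ^ Module.finrank ℝ (Esp n))⁻¹| = t ^ (-(n:ℝ)) := by
    rw [abs_of_pos (by positivity), Real.rpow_neg ht.le, Real.rpow_natCast]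
    simp
  rw [h3, smul_eq_mul] at h1
  have h4 : ENNReal.ofReal (t ^ (-(n:ℝ))) ≠ 0 := by
    simp only [ne_eq, ENNReal.ofReal_eq_zero, not_le]
    positivity
  exact (ENNReal.mul_right_inj h4 ENNReal.ofReal_ne_top).1 h1

lemma kerE_int_left (n : ℕ) (t m : ℝ) (x : Esp n) :
    ∫⁻ y, kerE n t m (x - y) = ∫⁻ z, kerE n t m z :=
  lintegral_sub_left_eq_self _ x

lemma kerE_int_right (n : ℕ) (t m : ℝ) (y : Esp n) :
    ∫⁻ x, kerE n t m (x - y) = ∫⁻ z, kerE n t m z :=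
  lintegral_sub_right_eq_self _ y

lemma kerE_conv_int (n : ℕ) (t m : ℝ) (K : ℝ≥0∞) (hK : ∫⁻ z, kerE n t m z ≤ K)
    (g : Esp n → ℝ≥0∞) (hg : Measurable g) :
    ∫⁻ x, ∫⁻ y, kerE n t m (x - y) * g y ≤ K * ∫⁻ y, g y := by
  rw [lintegral_lintegral_swap]
  · calc _ = ∫⁻ y, (∫⁻ z, kerE n t m z) * g y := by
          refine lintegral_congr fun y => ?_
          rw [lintegral_mul_const _ (by
            exact (kerE_meas n t m).comp (measurable_id.sub_const y)), kerE_int_right]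
      _ = (∫⁻ z, kerE n t m z) * ∫⁻ y, g y := lintegral_const_mul _ hg
      _ ≤ _ := by gcongr
  · exact ((kerE_meas2 n t m).mul (hg.comp measurable_snd)).aemeasurable

lemma kerE_le (n : ℕ) (t m : ℝ) (ht : 0 < t) (hm : 0 ≤ m) (z : Esp n) :
    kerE n t m z ≤ ENNReal.ofReal (t ^ (-(n:ℝ))) := by
  unfold kerE etaKer
  apply ENNReal.ofReal_le_ofReal
  have : (1 + ‖z‖ / t) ^ (-m) ≤ 1 := by
    apply Real.rpow_le_one_of_one_le_of_nonpos _ (by linarith)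
    have : 0 ≤ ‖z‖ / t := by positivity
    linarith
  calc _ ≤ t ^ (-(n:ℝ)) * 1 := by gcongr
    _ = _ := mul_one _

lemma kerE_conv_le (n : ℕ) (t m : ℝ) (ht : 0 < t) (hm : 0 ≤ m) (g : Esp n → ℝ≥0∞)
    (hg : ∫⁻ y, g y ≤ 1) (x : Esp n) :
    ∫⁻ y, kerE n t m (x - y) * g y ≤ ENNReal.ofReal (t ^ (-(n:ℝ))) := by
  calc _ ≤ ∫⁻ y, ENNReal.ofReal (t ^ (-(n:ℝ))) * g y := by
        gcongr with y
        exact kerE_le n t m ht hm _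
    _ = ENNReal.ofReal (t ^ (-(n:ℝ))) * ∫⁻ y, g y := lintegral_const_mul' _ _ ENNReal.ofReal_ne_top
    _ ≤ ENNReal.ofReal (t ^ (-(n:ℝ))) * 1 := by gcongr
    _ = _ := mul_one _

/-- Elementary threshold inequality. -/
lemma thr_pt (f M : ℝ≥0∞) (hM : M ≠ 0) (hM' : M ≠ ∞) (q : ℝ) (hq : 1 ≤ q) :
    f ≤ M + f ^ q * M ^ (1 - q) := by
  rcases le_total f M with h | h
  · exact h.trans le_self_add
  · refine le_trans ?_ le_add_self
    have h0 : M ^ (1 - q) * M ^ (q - 1) = 1 := by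
      rw [← ENNReal.rpow_add _ _ hM hM']; simp
    calc f = f * (M ^ (1 - q) * M ^ (q - 1)) := by rw [h0, mul_one]
      _ ≤ f * (M ^ (1 - q) * f ^ (q - 1)) := by
          gcongr
      _ = (f ^ (1:ℝ) * f ^ (q - 1)) * M ^ (1 - q) := by rw [ENNReal.rpow_one]; ring
      _ = _ := by
          rw [← ENNReal.rpow_add_of_nonneg _ _ zero_le_one (by linarith)]
          congr 2; ring

lemma thr_int {α : Type*} [MeasurableSpace α] (μ : Measure α) (k k' f : α → ℝ≥0∞) (q : α → ℝ)
    (s : ℝ) (A J : ℝ≥0∞) (hk : Measurable k) (hk' : Measurable k') (hf : Measurable f)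
    (hqm : Measurable q) (hq : ∀ y, 1 ≤ q y) (hJ0 : J ≠ 0) (hJt : J ≠ ∞)
    (hJ : ∫⁻ y, k' y * f y ^ q y ∂μ ≤ J)
    (hA : ∀ y, k y ≤ A * k' y * J ^ (q y / s - 1)) :
    ∫⁻ y, k y * f y ∂μ ≤ (∫⁻ y, k y ∂μ + A) * J ^ (1 / s) := by
  have hM0 : J ^ (1 / s) ≠ 0 := (ENNReal.rpow_pos (pos_iff_ne_zero.2 hJ0) hJt).ne'
  have hMt : J ^ (1 / s) ≠ ∞ := ENNReal.rpow_ne_top_of_ne_zero hJ0 hJt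
  have hpt : ∀ y, k y * f y ≤ k y * J ^ (1 / s) + A * (J ^ (1 / s) * J⁻¹) * (k' y * f y ^ q y) := by
    intro y
    calc k y * f y ≤ k y * (J ^ (1 / s) + f y ^ q y * (J ^ (1 / s)) ^ (1 - q y)) := by
          gcongr
          exact thr_pt _ _ hM0 hMt _ (hq y)
      _ = k y * J ^ (1 / s) + k y * (f y ^ q y * (J ^ (1 / s)) ^ (1 - q y)) := mul_add _ _ _
      _ ≤ k y * J ^ (1 / s) +
          (A * k' y * J ^ (q y / s - 1)) * (f y ^ q y * (J ^ (1 / s)) ^ (1 - q y)) := by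
          gcongr
          exact hA y
      _ = _ := by
          have : J ^ (q y / s - 1) * (J ^ (1 / s)) ^ (1 - q y) = J ^ (1 / s) * J⁻¹ := by
            rw [← ENNReal.rpow_mul, ← ENNReal.rpow_neg_one, ← ENNReal.rpow_add _ _ hJ0 hJt,
              ← ENNReal.rpow_add _ _ hJ0 hJt]
            congr 1; ring
          rw [← this]; ring
  calc _ ≤ ∫⁻ y, k y * J ^ (1 / s) + A * (J ^ (1 / s) * J⁻¹) * (k' y * f y ^ q y) ∂μ :=
        lintegral_mono hpt
    _ = (∫⁻ y, k y ∂μ) * J ^ (1 / s) + A * (J ^ (1 / s) * J⁻¹) * ∫⁻ y, k' y * f y ^ q y ∂μ := by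
        rw [lintegral_add_left (by fun_prop), lintegral_mul_const _ hk,
          lintegral_const_mul _ (by fun_prop)]
    _ ≤ (∫⁻ y, k y ∂μ) * J ^ (1 / s) + A * (J ^ (1 / s) * J⁻¹) * J := by gcongr
    _ = _ := by
        rw [mul_assoc A, mul_assoc _ J⁻¹, ENNReal.inv_mul_cancel hJ0 hJt]; ring

/-- The square trick. -/
lemma sq_trick (g τ B : ℝ≥0∞) (q Q : ℝ) (hB : 1 ≤ B)
    (hg : g ≤ B * τ ^ 2) (hq : 1 ≤ q) (hqQ : q ≤ Q) :
    (g / τ) ^ (2 * q) ≤ B ^ Q * g ^ q := by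
  have h1 : (g / τ) ^ 2 ≤ B * g := by
    have : g / τ ^ 2 ≤ B := ENNReal.div_le_of_le_mul hg
    calc (g / τ) ^ 2 = (g / τ ^ 2) * g := by
          simp only [div_eq_mul_inv, mul_pow, ENNReal.inv_pow]; ring
      _ ≤ _ := by gcongr
  rw [ENNReal.rpow_mul, ENNReal.rpow_two]
  calc _ ≤ (B * g) ^ q := by gcongr
    _ = B ^ q * g ^ q := ENNReal.mul_rpow_of_nonneg _ _ (by linarith)
    _ ≤ _ := by gcongr

/-- Comparison of powers using the decay condition. -/
lemma decay_pt (n : ℕ) (m c : ℝ) (hm : 0 < m) (hc : 0 < c) (x : Esp n) (q Q : ℝ) (hq : 1 ≤ q)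
    (hqQ : q ≤ Q) (hlog : |1 / q - 1 / Q| ≤ c / Real.log (Real.exp 1 + ‖x‖))
    (a : ℝ≥0∞) (ha : a ≤ 1) :
    a ^ q ≤ ENNReal.ofReal (Real.exp (m * c * Q ^ 2)) *
      (a ^ Q + ENNReal.ofReal ((1 + ‖x‖) ^ (-m))) := by
  have hE : 1 ≤ ENNReal.ofReal (Real.exp (m * c * Q ^ 2)) := by
    rw [← ENNReal.ofReal_one]
    apply ENNReal.ofReal_le_ofReal
    apply Real.one_le_exp; positivity
  set b := (1 + ‖x‖) ^ (-m) with hb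
  have hx1 : 0 < 1 + ‖x‖ := by positivity
  have hbpos : 0 < b := by positivity
  rcases le_total a (ENNReal.ofReal b) with h | h
  · calc a ^ q ≤ a := ENNReal.rpow_le_self_of_le_one ha hq
      _ ≤ a ^ Q + ENNReal.ofReal b := h.trans le_add_self
      _ = 1 * (a ^ Q + ENNReal.ofReal b) := (one_mul _).symm
      _ ≤ _ := by gcongr
  · have ha0 : a ≠ 0 := by
      intro h0
      rw [h0] at h
      simp only [nonpos_iff_eq_zero, ENNReal.ofReal_eq_zero] at h
      linarith
    have hat : a ≠ ∞ := ne_top_of_le_ne_top ENNReal.one_ne_top ha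
    have h1 : a ^ (q - Q) ≤ ENNReal.ofReal (Real.exp (m * c * Q ^ 2)) := by
      have h2 : a ^ (q - Q) ≤ (ENNReal.ofReal b) ^ (q - Q) := by
        rw [← neg_sub Q q, ENNReal.rpow_neg, ENNReal.rpow_neg]
        apply ENNReal.inv_le_inv.2
        gcongr
      refine h2.trans ?_
      rw [ENNReal.ofReal_rpow_of_pos hbpos]
      apply ENNReal.ofReal_le_ofReal
      rw [hb, ← Real.rpow_mul hx1.le, Real.rpow_def_of_pos hx1]
      apply Real.exp_le_exp.2
      have hL : 0 < Real.log (Real.exp 1 + ‖x‖) := by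
        apply Real.log_pos
        have := Real.add_one_le_exp 1
        have := norm_nonneg x
        linarith
      have hL2 : Real.log (1 + ‖x‖) ≤ Real.log (Real.exp 1 + ‖x‖) := by
        apply Real.log_le_log hx1
        have := Real.add_one_le_exp 1
        linarith
      have h3 : 1 / q - 1 / Q ≤ c / Real.log (Real.exp 1 + ‖x‖) := (le_abs_self _).trans hlog
      have hqp : 0 < q := by linarith
      have hQp : 0 < Q := by linarith
      have h4 : 1 / q - 1 / Q = (Q - q) / (q * Q) := by
        field_simp
      rw [h4, div_le_div_iff₀ (by positivity) hL] at h3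
      have h5 : (Q - q) * Real.log (1 + ‖x‖) ≤ c * (q * Q) :=
        le_trans (by gcongr) h3
      have h6 : c * (q * Q) ≤ c * (Q * Q) := by gcongr
      calc _ = m * ((Q - q) * Real.log (1 + ‖x‖)) := by ring
        _ ≤ m * (c * (Q * Q)) := mul_le_mul_of_nonneg_left (h5.trans h6) hm.le
        _ = _ := by ring
    calc a ^ q = a ^ (q - Q) * a ^ Q := by
          rw [← ENNReal.rpow_add _ _ ha0 hat]; congr 1; ring
      _ ≤ ENNReal.ofReal (Real.exp (m * c * Q ^ 2)) * a ^ Q := by gcongr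
      _ ≤ _ := by gcongr; exact le_self_add

lemma part_small (n : ℕ) (m : ℝ) (hm : (n : ℝ) < m) (q : Esp n → ℝ)
    (hq : ∀ x, 1 ≤ q x) (Q c : ℝ) (hqQ : ∀ x, q x ≤ Q) (hc : 0 < c)
    (hlog : ∀ x : Esp n, |1 / q x - 1 / Q| ≤ c / Real.log (Real.exp 1 + ‖x‖)) :
    ∃ C : ℝ≥0∞, C ≠ ∞ ∧ ∀ t : ℝ, 0 < t → ∀ F : Esp n → ℝ≥0∞, Measurable F → (∀ y, F y ≤ 1) →
      ∫⁻ y, F y ^ q y ≤ 1 → ∀ τ : ℝ≥0∞,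
      (min 1 (ENNReal.ofReal (t ^ (-(n:ℝ))))) ^ (1 / Q) ≤ τ ^ 2 →
      ∫⁻ x, ((∫⁻ y, kerE n t m (x - y) * F y) / τ) ^ (2 * q x) ≤ C := by
  have hm0 : 0 < m := lt_of_le_of_lt (Nat.cast_nonneg n) hm
  obtain ⟨K, hKt, hK⟩ := kerE_bound n m hm
  have hQ : 1 ≤ Q := (hq 0).trans (hqQ 0)
  have hQ0 : 0 < Q := by linarith
  have hfin := finite_integral_one_add_norm (E := Esp n) (μ := volume) (r := m)
    (by simpa using hm)
  set H := ∫⁻ x : Esp n, ENNReal.ofReal ((1 + ‖x‖) ^ (-m)) with hH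
  set B := K + 1 with hB
  have hB1 : 1 ≤ B := le_add_self
  have hBt : B ≠ ∞ := by simp [hB, hKt]
  have hB0 : B ≠ 0 := (zero_lt_one.trans_le hB1).ne'
  set D := ENNReal.ofReal (Real.exp (m * c * Q ^ 2)) with hD
  refine ⟨B ^ Q * (B ^ Q * (D * (K + H))), ?_, ?_⟩
  · have := ENNReal.rpow_ne_top_of_nonneg hQ0.le hBt
    have hDt : D ≠ ∞ := ENNReal.ofReal_ne_top
    have : K + H ≠ ∞ := by simp [hKt, hfin.ne]
    finiteness
  intro t ht F hF hF1 hFq τ hτ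
  have hFQ : ∫⁻ y, F y ^ Q ≤ 1 := by
    refine le_trans (lintegral_mono fun y => ?_) hFq
    exact ENNReal.rpow_le_rpow_of_exponent_ge (hF1 y) (hqQ y)
  have hkm : ∀ x, Measurable fun y => kerE n t m (x - y) := fun x =>
    (kerE_meas n t m).comp (measurable_const.sub measurable_id)
  set J : Esp n → ℝ≥0∞ := fun x => ∫⁻ y, kerE n t m (x - y) * F y ^ Q with hJ
  have hJt : ∀ x, J x ≤ ENNReal.ofReal (t ^ (-(n:ℝ))) := fun x =>
    kerE_conv_le n t m ht hm0.le _ hFQ x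
  set g : Esp n → ℝ≥0∞ := fun x => ∫⁻ y, kerE n t m (x - y) * F y with hg
  have hgB : ∀ x, g x ≤ B := by
    intro x
    calc g x ≤ ∫⁻ y, kerE n t m (x - y) := by
          apply lintegral_mono
          intro y
          calc _ ≤ kerE n t m (x - y) * 1 := mul_le_mul_right (hF1 y) _
            _ = _ := mul_one _
      _ ≤ K := by rw [kerE_int_left]; exact hK t ht
      _ ≤ B := le_self_add
  have hgJ : ∀ x, g x ≤ B * J x ^ (1 / Q) := by
    intro x
    by_cases h0 : J x = 0
    · have : g x = 0 := by
        simp only [hJ] at h0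
        simp only [hg]
        rw [lintegral_eq_zero_iff (by have := hkm x; fun_prop)] at h0
        rw [lintegral_eq_zero_iff (by have := hkm x; fun_prop)]
        filter_upwards [h0] with y hy
        simp only [Pi.zero_apply, mul_eq_zero, ENNReal.rpow_eq_zero_iff_of_pos hQ0] at hy ⊢
        exact hy
      rw [this]; exact zero_le
    · have h1 := thr_int volume (fun y => kerE n t m (x - y)) (fun y => kerE n t m (x - y)) F
        (fun _ => Q) Q 1 (J x) (hkm x) (hkm x) hF measurable_const (fun _ => hQ) h0
        (ne_top_of_le_ne_top ENNReal.ofReal_ne_top (hJt x)) le_rfl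
        (fun y => by simp [div_self hQ0.ne'])
      refine h1.trans ?_
      gcongr
      rw [hB]
      gcongr
      rw [kerE_int_left]; exact hK t ht
  have hgτ : ∀ x, g x ≤ B * τ ^ 2 := by
    intro x
    refine le_trans ?_ (mul_le_mul_right hτ B)
    rcases le_total 1 (ENNReal.ofReal (t ^ (-(n:ℝ)))) with h | h
    · rw [min_eq_left h]; simpa using hgB x
    · rw [min_eq_right h]
      refine (hgJ x).trans ?_
      gcongr
      exact hJt x
  have hpt : ∀ x, (g x / τ) ^ (2 * q x) ≤
      B ^ Q * (B ^ Q * (D * (J x + ENNReal.ofReal ((1 + ‖x‖) ^ (-m))))) := by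
    intro x
    refine (sq_trick (g x) τ B (q x) Q hB1 (hgτ x) (hq x) (hqQ x)).trans ?_
    gcongr
    have h1 : g x = B * (g x / B) := (ENNReal.mul_div_cancel hB0 hBt).symm
    have h2 : g x / B ≤ 1 := ENNReal.div_le_of_le_mul (by simpa using hgB x)
    have h3 := decay_pt n m c hm0 hc x (q x) Q (hq x) (hqQ x) (hlog x) (g x / B) h2
    have h4 : (g x / B) ^ Q ≤ J x := by
      have : g x / B ≤ J x ^ (1 / Q) := ENNReal.div_le_of_le_mul' (hgJ x)
      calc _ ≤ (J x ^ (1 / Q)) ^ Q := by gcongr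
        _ = J x := by
          rw [← ENNReal.rpow_mul, one_div, inv_mul_cancel₀ hQ0.ne', ENNReal.rpow_one]
    calc g x ^ q x = (B * (g x / B)) ^ q x := by rw [← h1]
      _ = B ^ q x * (g x / B) ^ q x := ENNReal.mul_rpow_of_nonneg _ _ (by linarith [hq x])
      _ ≤ B ^ Q * (D * ((g x / B) ^ Q + ENNReal.ofReal ((1 + ‖x‖) ^ (-m)))) := by
          gcongr
          exact hqQ x
      _ ≤ _ := by gcongr
  have hJm : Measurable J := by
    apply Measurable.lintegral_prod_right'
      (f := fun z : Esp n × Esp n => kerE n t m (z.1 - z.2) * F z.2 ^ Q)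
    exact (kerE_meas2 n t m).mul ((hF.comp measurable_snd).pow_const Q)
  calc _ ≤ ∫⁻ x, B ^ Q * (B ^ Q * (D * (J x + ENNReal.ofReal ((1 + ‖x‖) ^ (-m))))) :=
        lintegral_mono hpt
    _ = B ^ Q * (B ^ Q * (D * ((∫⁻ x, J x) + H))) := by
        rw [lintegral_const_mul _ (by fun_prop), lintegral_const_mul _ (by fun_prop),
          lintegral_const_mul _ (by fun_prop), lintegral_add_left hJm]
    _ ≤ _ := by
        gcongr
        calc ∫⁻ x, J x ≤ K * ∫⁻ y, F y ^ Q := kerE_conv_int n t m K (hK t ht) _ (hF.pow_const Q)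
          _ ≤ K * 1 := by gcongr
          _ = K := mul_one _

lemma part_far (n : ℕ) (m : ℝ) (hm : (n : ℝ) < m) (q : Esp n → ℝ)
    (hq : ∀ x, 1 ≤ q x) (Q : ℝ) (hqQ : ∀ x, q x ≤ Q) (B : ℝ≥0∞) (hB1 : 1 ≤ B) (hBt : B ≠ ∞) :
    ∃ C : ℝ≥0∞, C ≠ ∞ ∧ ∀ t : ℝ, 0 < t → ∀ F : Esp n → ℝ≥0∞, Measurable F →
      (∀ y, F y ≤ F y ^ q y) →
      ∫⁻ y, F y ^ q y ≤ 1 → ∀ τ : ℝ≥0∞,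
      (min 1 (ENNReal.ofReal (t ^ (-(n:ℝ))))) ^ (1 / Q) ≤ τ ^ 2 →
      ∀ k : Esp n → Esp n → ℝ≥0∞, (∀ x y, k x y ≤ kerE n t m (x - y)) →
        (∀ x y, k x y ≤ B * min 1 (ENNReal.ofReal (t ^ (-(n:ℝ))))) →
      ∫⁻ x, ((∫⁻ y, k x y * F y) / τ) ^ (2 * q x) ≤ C := by
  obtain ⟨K, hKt, hK⟩ := kerE_bound n m hm
  have hQ : 1 ≤ Q := (hq 0).trans (hqQ 0)
  have hQ0 : 0 < Q := by linarith
  have hB0 : B ≠ 0 := (zero_lt_one.trans_le hB1).ne'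
  refine ⟨B ^ Q * (B ^ Q * K), ?_, ?_⟩
  · have := ENNReal.rpow_ne_top_of_nonneg hQ0.le hBt
    finiteness
  intro t ht F hF hFF hFq τ hτ k hk1 hk2
  have hF1 : ∫⁻ y, F y ≤ 1 := (lintegral_mono hFF).trans hFq
  set σ := min 1 (ENNReal.ofReal (t ^ (-(n:ℝ)))) with hσ
  have hσ1 : σ ≤ 1 := min_le_left _ _
  have hσt : σ ≠ ∞ := ne_top_of_le_ne_top ENNReal.one_ne_top hσ1
  set g : Esp n → ℝ≥0∞ := fun x => ∫⁻ y, k x y * F y with hg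
  have hgσ : ∀ x, g x ≤ B * σ := by
    intro x
    calc g x ≤ ∫⁻ y, B * σ * F y := by
          apply lintegral_mono
          intro y
          have := hk2 x y
          dsimp only
          gcongr
      _ = B * σ * ∫⁻ y, F y := lintegral_const_mul _ hF
      _ ≤ B * σ * 1 := by gcongr
      _ = _ := mul_one _
  have hgτ : ∀ x, g x ≤ B * τ ^ 2 := by
    intro x
    refine (hgσ x).trans ?_
    gcongr
    refine le_trans ?_ hτ
    calc σ = σ ^ (1:ℝ) := (ENNReal.rpow_one _).symm
      _ ≤ σ ^ (1 / Q) := ENNReal.rpow_le_rpow_of_exponent_ge hσ1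
          (by rw [div_le_one hQ0]; exact hQ)
  have hpt : ∀ x, (g x / τ) ^ (2 * q x) ≤
      B ^ Q * (B ^ Q * ∫⁻ y, kerE n t m (x - y) * F y) := by
    intro x
    refine (sq_trick (g x) τ B (q x) Q hB1 (hgτ x) (hq x) (hqQ x)).trans ?_
    gcongr
    have h1 : g x = B * (g x / B) := (ENNReal.mul_div_cancel hB0 hBt).symm
    have h2 : g x / B ≤ 1 := ENNReal.div_le_of_le_mul (by
      refine (hgσ x).trans ?_
      rw [mul_comm]; gcongr)
    calc g x ^ q x = (B * (g x / B)) ^ q x := by rw [← h1]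
      _ = B ^ q x * (g x / B) ^ q x := ENNReal.mul_rpow_of_nonneg _ _ (by linarith [hq x])
      _ ≤ B ^ Q * (g x / B) := by
          gcongr
          · exact hqQ x
          · exact ENNReal.rpow_le_self_of_le_one h2 (hq x)
      _ ≤ B ^ Q * g x := by
          gcongr
          exact ENNReal.div_le_of_le_mul (by
            calc g x = g x * 1 := (mul_one _).symm
              _ ≤ _ := by gcongr)
      _ ≤ _ := by
          gcongr
          apply lintegral_mono
          intro y
          have := hk1 x y
          dsimp only
          gcongr
  have hJm : Measurable fun x => ∫⁻ y, kerE n t m (x - y) * F y := by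
    apply Measurable.lintegral_prod_right'
      (f := fun z : Esp n × Esp n => kerE n t m (z.1 - z.2) * F z.2)
    exact (kerE_meas2 n t m).mul (hF.comp measurable_snd)
  calc _ ≤ ∫⁻ x, B ^ Q * (B ^ Q * ∫⁻ y, kerE n t m (x - y) * F y) := lintegral_mono hpt
    _ = B ^ Q * (B ^ Q * (∫⁻ x, ∫⁻ y, kerE n t m (x - y) * F y)) := by
        rw [lintegral_const_mul _ (by fun_prop), lintegral_const_mul _ hJm]
    _ ≤ _ := by
        gcongr
        calc _ ≤ K * ∫⁻ y, F y := kerE_conv_int n t m K (hK t ht) _ hF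
          _ ≤ K * 1 := by gcongr
          _ = K := mul_one _

lemma near_pt (n : ℕ) (hn : 1 ≤ n) (m δ c Q t : ℝ) (hδ : 0 < δ) (hc : 0 < c) (ht : 0 < t)
    (q : Esp n → ℝ) (hq : ∀ x, 1 ≤ q x) (hqQ : ∀ x, q x ≤ Q)
    (hlog : ∀ x y : Esp n, |1 / q x - 1 / q y| ≤ c / Real.log (Real.exp 1 + 1 / ‖x - y‖))
    (x y : Esp n) (hxy : ‖x - y‖ ≤ Real.exp (-(n * Q * c / δ)))
    (J : ℝ≥0∞) (hJ1 : 1 ≤ J) (hJ : J ≤ ENNReal.ofReal (t ^ (-(n:ℝ)))) :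
    kerE n t m (x - y) ≤ ENNReal.ofReal (Real.exp (n * Q * c)) * kerE n t (m - δ) (x - y) *
      J ^ (q y / q x - 1) := by
  have hQ : 1 ≤ Q := (hq 0).trans (hqQ 0)
  have hn' : (1:ℝ) ≤ n := by exact_mod_cast hn
  have ha : 0 < n * Q * c := by positivity
  set a := n * Q * c with hadef
  set ρ := ‖x - y‖ with hρ
  have hρ0 : 0 ≤ ρ := norm_nonneg _
  have hw1 : 1 ≤ 1 + ρ / t := by
    have : 0 ≤ ρ / t := by positivity
    linarith
  have hw0 : 0 < 1 + ρ / t := by linarith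
  have hk : kerE n t m (x - y) = kerE n t (m - δ) (x - y) *
      ENNReal.ofReal ((1 + ρ / t) ^ (-δ)) := by
    unfold kerE etaKer
    rw [← ENNReal.ofReal_mul (by positivity), mul_assoc, ← Real.rpow_add hw0]
    congr 3; ring
  have key : ENNReal.ofReal ((1 + ρ / t) ^ (-δ)) ≤
      ENNReal.ofReal (Real.exp a) * J ^ (q y / q x - 1) := by
    have hqx := hq x
    have hqy := hq y
    have hqxp : 0 < q x := by linarith
    have hqyp : 0 < q y := by linarith
    rcases le_or_gt 0 (q y / q x - 1) with he | he
    · calc _ ≤ (1 : ℝ≥0∞) * 1 := by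
            rw [one_mul, ← ENNReal.ofReal_one]
            apply ENNReal.ofReal_le_ofReal
            exact Real.rpow_le_one_of_one_le_of_nonpos hw1 (by linarith)
        _ ≤ _ := by
            gcongr
            · rw [← ENNReal.ofReal_one]
              exact ENNReal.ofReal_le_ofReal (Real.one_le_exp ha.le)
            · calc (1 : ℝ≥0∞) = 1 ^ (q y / q x - 1) := (ENNReal.one_rpow _).symm
                _ ≤ _ := by gcongr
    · have hρpos : 0 < ρ := by
        rcases hρ0.lt_or_eq with h | h
        · exact h
        · exfalso
          have : x = y := by
            rw [hρ] at h
            exact sub_eq_zero.1 (norm_eq_zero.1 h.symm)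
          rw [this, div_self (by linarith)] at he
          linarith
      have h1 : ENNReal.ofReal ((t ^ (-(n:ℝ))) ^ (q y / q x - 1)) ≤ J ^ (q y / q x - 1) := by
        rw [← ENNReal.ofReal_rpow_of_pos (by positivity)]
        rw [show q y / q x - 1 = -(1 - q y / q x) by ring, ENNReal.rpow_neg, ENNReal.rpow_neg]
        apply ENNReal.inv_le_inv.2
        gcongr
        linarith
      refine le_trans ?_ (mul_le_mul_right h1 _)
      rw [← ENNReal.ofReal_mul (by positivity)]
      apply ENNReal.ofReal_le_ofReal
      rw [Real.rpow_def_of_pos hw0, ← Real.rpow_mul ht.le, Real.rpow_def_of_pos ht, ← Real.exp_add]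
      apply Real.exp_le_exp.2
      set L := Real.log (Real.exp 1 + 1 / ρ) with hLdef
      have he1 := Real.exp_pos 1
      have hL0 : a / δ ≤ L := by
        have h2 : Real.log ρ ≤ -(a / δ) := by
          rw [← Real.log_exp (-(a / δ))]
          exact Real.log_le_log hρpos hxy
        have h3 : Real.log (1 / ρ) ≤ L := Real.log_le_log (by positivity) (by linarith)
        rw [one_div, Real.log_inv] at h3
        linarith
      have hLpos : 0 < L := lt_of_lt_of_le (by positivity) hL0
      have hTL : -Real.log t ≤ Real.log (1 + ρ / t) + L := by
        rw [hLdef, ← Real.log_mul hw0.ne' (by positivity), ← Real.log_inv]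
        apply Real.log_le_log (by positivity)
        calc t⁻¹ = (ρ / t) * (1 / ρ) := by field_simp
          _ ≤ _ := by gcongr <;> linarith
      have hw : 0 ≤ Real.log (1 + ρ / t) := Real.log_nonneg hw1
      have hE : 1 - q y / q x ≤ Q * c / L := by
        have h2 : 1 / q y - 1 / q x ≤ c / L := by
          have := hlog x y
          rw [abs_sub_comm] at this
          exact (le_abs_self _).trans this
        calc 1 - q y / q x = q y * (1 / q y - 1 / q x) := by field_simp
          _ ≤ q y * (c / L) := by gcongr
          _ ≤ Q * (c / L) := by gcongr; exact hqQ y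
          _ = _ := by ring
      set T := -Real.log t with hT
      have hEpos : 0 < 1 - q y / q x := by linarith
      have main : n * T * (1 - q y / q x) ≤ a + δ * Real.log (1 + ρ / t) := by
        rcases le_total T 0 with hT0 | hT0
        · have : n * T * (1 - q y / q x) ≤ 0 :=
            mul_nonpos_of_nonpos_of_nonneg (mul_nonpos_of_nonneg_of_nonpos (by positivity) hT0)
              hEpos.le
          have : 0 ≤ δ * Real.log (1 + ρ / t) := by positivity
          linarith
        · calc n * T * (1 - q y / q x) ≤ n * T * (Q * c / L) := by gcongr
            _ = (a / L) * T := by rw [hadef]; ring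
            _ ≤ (a / L) * (Real.log (1 + ρ / t) + L) := by gcongr
            _ = a + (a / L) * Real.log (1 + ρ / t) := by field_simp; ring
            _ ≤ _ := by
                gcongr
                rw [div_le_iff₀ hLpos]
                rw [div_le_iff₀ hδ] at hL0
                linarith
      have h5 : Real.log t = -T := by rw [hT]; ring
      rw [h5]
      nlinarith [main]
  calc _ = kerE n t (m - δ) (x - y) * ENNReal.ofReal ((1 + ρ / t) ^ (-δ)) := hk
    _ ≤ kerE n t (m - δ) (x - y) * (ENNReal.ofReal (Real.exp a) * J ^ (q y / q x - 1)) := by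
        gcongr
    _ = _ := by ring

lemma kerE_mono_m (n : ℕ) (t m m' : ℝ) (ht : 0 < t) (h : m' ≤ m) (z : Esp n) :
    kerE n t m z ≤ kerE n t m' z := by
  unfold kerE etaKer
  apply ENNReal.ofReal_le_ofReal
  have : 0 ≤ ‖z‖ / t := by positivity
  gcongr
  linarith

/-- The truncated kernel. -/
def kerNear (n : ℕ) (t m ρ : ℝ) (x y : Esp n) : ℝ≥0∞ :=
  if ‖x - y‖ ≤ ρ then kerE n t m (x - y) else 0

lemma kerNear_le (n : ℕ) (t m ρ : ℝ) (x y : Esp n) :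
    kerNear n t m ρ x y ≤ kerE n t m (x - y) := by
  unfold kerNear
  split_ifs
  · exact le_rfl
  · exact zero_le

lemma kerNear_meas (n : ℕ) (t m ρ : ℝ) (x : Esp n) : Measurable (kerNear n t m ρ x) := by
  unfold kerNear
  apply Measurable.ite
  · exact measurableSet_le (by fun_prop) measurable_const
  · exact (kerE_meas n t m).comp (measurable_const.sub measurable_id)
  · exact measurable_const

lemma part_near (n : ℕ) (hn : 1 ≤ n) (m : ℝ) (hm : (n : ℝ) < m) (q : Esp n → ℝ)
    (hqm : Measurable q)
    (hq : ∀ x, 1 ≤ q x) (Q c : ℝ) (hqQ : ∀ x, q x ≤ Q) (hc : 0 < c)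
    (hlog : ∀ x y : Esp n, |1 / q x - 1 / q y| ≤ c / Real.log (Real.exp 1 + 1 / ‖x - y‖)) :
    ∃ ρ : ℝ, 0 < ρ ∧ ∃ C : ℝ≥0∞, C ≠ ∞ ∧ ∀ t : ℝ, 0 < t → ∀ F : Esp n → ℝ≥0∞, Measurable F →
      (∀ y, F y ≤ F y ^ q y) →
      ∫⁻ y, F y ^ q y ≤ 1 → ∀ T : ℝ≥0∞,
      (∀ x, ENNReal.ofReal (t ^ (-(n:ℝ))) ≤ T ^ (2 * q x)) →
      ∫⁻ x, ((∫⁻ y, kerNear n t m ρ x y * F y) / T) ^ (2 * q x) ≤ C := by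
  have hQ : 1 ≤ Q := (hq 0).trans (hqQ 0)
  have hQ0 : 0 < Q := by linarith
  have hn0 : (0:ℝ) ≤ n := Nat.cast_nonneg n
  set δ := (m - n) / 2 with hδdef
  have hδ : 0 < δ := by rw [hδdef]; linarith
  have hm' : (n:ℝ) < m - δ := by rw [hδdef]; linarith
  obtain ⟨K, hKt, hK⟩ := kerE_bound n (m - δ) hm'
  set A := ENNReal.ofReal (Real.exp (n * Q * c)) with hA
  have hA1 : 1 ≤ A := by
    rw [← ENNReal.ofReal_one]
    exact ENNReal.ofReal_le_ofReal (Real.one_le_exp (by positivity))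
  set B := K + A with hB
  have hB1 : 1 ≤ B := hA1.trans le_add_self
  have hBt : B ≠ ∞ := by simp [hB, hKt, hA]
  refine ⟨Real.exp (-(n * Q * c / δ)), Real.exp_pos _, B ^ (2 * Q) * K, ?_, ?_⟩
  · have := ENNReal.rpow_ne_top_of_nonneg (by positivity : 0 ≤ 2 * Q) hBt
    finiteness
  intro t ht F hF hFF hFq T hT
  have hkm : ∀ x, Measurable fun y => kerE n t (m - δ) (x - y) := fun x =>
    (kerE_meas n t _).comp (measurable_const.sub measurable_id)
  have hFqm : Measurable fun y => F y ^ q y := by fun_prop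
  set J : Esp n → ℝ≥0∞ := fun x => ∫⁻ y, kerE n t (m - δ) (x - y) * F y ^ q y with hJ
  have hJt : ∀ x, J x ≤ ENNReal.ofReal (t ^ (-(n:ℝ))) := fun x =>
    kerE_conv_le n t _ ht (by linarith) _ hFq x
  set g : Esp n → ℝ≥0∞ :=
    fun x => ∫⁻ y, kerNear n t m (Real.exp (-(n * Q * c / δ))) x y * F y with hg
  have hkle : ∀ x y, kerNear n t m (Real.exp (-(n * Q * c / δ))) x y ≤ kerE n t (m - δ) (x - y) :=
    fun x y => (kerNear_le _ _ _ _ _ _).trans (kerE_mono_m n t _ _ ht (by linarith) _)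
  have hgJ : ∀ x, g x ≤ B * J x ^ (1 / q x) := by
    intro x
    have hqx := hq x
    rcases le_total (J x) 1 with h1 | h1
    · calc g x ≤ J x := by
            apply lintegral_mono
            intro y
            exact mul_le_mul' (hkle x y) (hFF y)
        _ = J x ^ (1:ℝ) := (ENNReal.rpow_one _).symm
        _ ≤ J x ^ (1 / q x) := ENNReal.rpow_le_rpow_of_exponent_ge h1
            (by rw [div_le_one (by linarith)]; exact hqx)
        _ = 1 * J x ^ (1 / q x) := (one_mul _).symm
        _ ≤ _ := by gcongr
    · have h2 := thr_int volume (kerNear n t m (Real.exp (-(n * Q * c / δ))) x)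
        (fun y => kerE n t (m - δ) (x - y)) F q (q x) A (J x) (kerNear_meas _ _ _ _ _) (hkm x) hF
        hqm hq (zero_lt_one.trans_le h1).ne'
        (ne_top_of_le_ne_top ENNReal.ofReal_ne_top (hJt x)) le_rfl
        (fun y => by
          unfold kerNear
          split_ifs with h
          · exact near_pt n hn m δ c Q t hδ hc ht q hq hqQ hlog x y h (J x) h1 (hJt x)
          · exact zero_le)
      refine h2.trans ?_
      gcongr
      rw [hB]
      gcongr
      refine le_trans (lintegral_mono (hkle x)) ?_
      rw [kerE_int_left]; exact hK t ht
  have hpt : ∀ x, (g x / T) ^ (2 * q x) ≤ B ^ (2 * Q) * J x := by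
    intro x
    have hqx := hq x
    have hqx0 : 0 ≤ 2 * q x := by linarith
    rw [ENNReal.div_rpow_of_nonneg _ _ hqx0]
    apply ENNReal.div_le_of_le_mul
    calc g x ^ (2 * q x) ≤ (B * J x ^ (1 / q x)) ^ (2 * q x) := by
          gcongr
          exact hgJ x
      _ = B ^ (2 * q x) * J x ^ 2 := by
          rw [ENNReal.mul_rpow_of_nonneg _ _ hqx0, ← ENNReal.rpow_mul, ← ENNReal.rpow_two]
          congr 2
          field_simp
      _ ≤ B ^ (2 * Q) * J x ^ 2 := by
          gcongr
          exact hqQ x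
      _ = B ^ (2 * Q) * J x * J x := by ring
      _ ≤ _ := by
          gcongr
          exact (hJt x).trans (hT x)
  have hJm : Measurable J := by
    apply Measurable.lintegral_prod_right'
      (f := fun z : Esp n × Esp n => kerE n t (m - δ) (z.1 - z.2) * F z.2 ^ q z.2)
    exact (kerE_meas2 n t _).mul (hFqm.comp measurable_snd)
  calc _ ≤ ∫⁻ x, B ^ (2 * Q) * J x := lintegral_mono hpt
    _ = B ^ (2 * Q) * ∫⁻ x, J x := lintegral_const_mul _ hJm
    _ ≤ _ := by
        gcongr
        calc ∫⁻ x, J x ≤ K * ∫⁻ y, F y ^ q y := kerE_conv_int n t _ K (hK t ht) _ hFqm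
          _ ≤ K * 1 := by gcongr
          _ = K := mul_one _

lemma pow_sum_int (n : ℕ) (q : Esp n → ℝ) (hqm : Measurable q) (hq : ∀ x, 1 ≤ q x) (Q : ℝ)
    (hqQ : ∀ x, q x ≤ Q) (a b : Esp n → ℝ≥0∞) (ha : Measurable a) (T : ℝ≥0∞) :
    ∫⁻ x, ((a x + b x) / T) ^ (2 * q x) ≤ 2 ^ (2 * Q) *
      ((∫⁻ x, (a x / T) ^ (2 * q x)) + ∫⁻ x, (b x / T) ^ (2 * q x)) := by
  have hQ : 1 ≤ Q := (hq 0).trans (hqQ 0)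
  have h2 : (2 : ℝ≥0∞) ^ (2 * Q) ≠ ∞ :=
    ENNReal.rpow_ne_top_of_nonneg (by linarith) (by simp)
  rw [← lintegral_add_left (by fun_prop), ← lintegral_const_mul' _ _ h2]
  apply lintegral_mono
  intro x
  have hqx := hq x
  dsimp only
  rw [ENNReal.add_div]
  refine (ENNReal.add_rpow_le_two_rpow_mul_rpow_add_rpow _ _ (by linarith)).trans ?_
  gcongr
  · norm_num
  · exact hqQ x

lemma kerNear_meas2 (n : ℕ) (t m ρ : ℝ) :
    Measurable fun z : Esp n × Esp n => kerNear n t m ρ z.1 z.2 := by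
  unfold kerNear
  apply Measurable.ite
  · exact measurableSet_le (by fun_prop) measurable_const
  · exact kerE_meas2 n t m
  · exact measurable_const

lemma kerE_far (n : ℕ) (t m ρ : ℝ) (hm : (n:ℝ) < m) (ht : 0 < t) (ht1 : t ≤ 1) (hρ : 0 < ρ)
    (z : Esp n) (hz : ρ < ‖z‖) : kerE n t m z ≤ ENNReal.ofReal (ρ ^ (-m)) := by
  unfold kerE etaKer
  apply ENNReal.ofReal_le_ofReal
  have hm0 : 0 < m := lt_of_le_of_lt (Nat.cast_nonneg n) hm
  have h1 : (1 + ‖z‖ / t) ^ (-m) ≤ (ρ / t) ^ (-m) := by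
    apply Real.rpow_le_rpow_of_nonpos (by positivity) _ (by linarith)
    have : ρ / t ≤ ‖z‖ / t := by gcongr
    linarith
  calc _ ≤ t ^ (-(n:ℝ)) * (ρ / t) ^ (-m) := by gcongr
    _ = ρ ^ (-m) * t ^ (m - n) := by
        rw [Real.div_rpow hρ.le ht.le, sub_eq_add_neg, Real.rpow_add ht, Real.rpow_neg ht.le m]
        field_simp
    _ ≤ ρ ^ (-m) * 1 := by
        gcongr
        exact Real.rpow_le_one ht.le ht1 (by linarith)
    _ = _ := mul_one _

lemma main_mod (n : ℕ) (hn : 1 ≤ n) (m : ℝ) (hm : (n : ℝ) < m) (q : Esp n → ℝ)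
    (hqm : Measurable q)
    (hq : ∀ x, 1 ≤ q x) (Q c : ℝ) (hqQ : ∀ x, q x ≤ Q) (hc : 0 < c)
    (hlog : ∀ x y : Esp n, |1 / q x - 1 / q y| ≤ c / Real.log (Real.exp 1 + 1 / ‖x - y‖))
    (hdec : ∀ x : Esp n, |1 / q x - 1 / Q| ≤ c / Real.log (Real.exp 1 + ‖x‖)) :
    ∃ C : ℝ≥0∞, C ≠ ∞ ∧ ∀ t : ℝ, 0 < t → ∀ F : Esp n → ℝ≥0∞, Measurable F →
      ∫⁻ y, F y ^ q y ≤ 1 → ∀ T : ℝ≥0∞,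
      (min 1 (ENNReal.ofReal (t ^ (-(n:ℝ))))) ^ (1 / Q) ≤ T ^ 2 →
      (t ≤ 1 → ∀ x, ENNReal.ofReal (t ^ (-(n:ℝ))) ≤ T ^ (2 * q x)) →
      ∫⁻ x, ((∫⁻ y, kerE n t m (x - y) * F y) / T) ^ (2 * q x) ≤ C := by
  have hQ : 1 ≤ Q := (hq 0).trans (hqQ 0)
  have hm0 : 0 < m := lt_of_le_of_lt (Nat.cast_nonneg n) hm
  obtain ⟨C1, hC1t, hC1⟩ := part_small n m hm q hq Q c hqQ hc hdec
  obtain ⟨ρ, hρ, C2, hC2t, hC2⟩ := part_near n hn m hm q hqm hq Q c hqQ hc hlog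
  obtain ⟨C3, hC3t, hC3⟩ := part_far n m hm q hq Q hqQ (max 1 (ENNReal.ofReal (ρ ^ (-m))))
    (le_max_left _ _) (by simp)
  set W : ℝ≥0∞ := 2 ^ (2 * Q) with hW
  have hWt : W ≠ ∞ := ENNReal.rpow_ne_top_of_nonneg (by linarith) (by simp)
  have hW1 : 1 ≤ W := ENNReal.one_le_rpow (by norm_num) (by linarith)
  refine ⟨W * (C1 + W * (C2 + C3)), by finiteness, ?_⟩
  intro t ht F hF hFq T hT1 hT2
  set F1 : Esp n → ℝ≥0∞ := fun y => if F y ≤ 1 then F y else 0 with hF1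
  set F2 : Esp n → ℝ≥0∞ := fun y => if F y ≤ 1 then 0 else F y with hF2
  have hset : MeasurableSet {y | F y ≤ 1} := measurableSet_le hF measurable_const
  have hF1m : Measurable F1 := Measurable.ite hset hF measurable_const
  have hF2m : Measurable F2 := Measurable.ite hset measurable_const hF
  have hsum : ∀ y, F y = F1 y + F2 y := by
    intro y
    simp only [hF1, hF2]
    split_ifs <;> simp
  have hF1le : ∀ y, F1 y ≤ 1 := by
    intro y
    simp only [hF1]
    split_ifs with h
    · exact h
    · exact zero_le
  have hq1 : ∫⁻ y, F1 y ^ q y ≤ 1 := by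
    refine le_trans (lintegral_mono fun y => ?_) hFq
    have := hq y
    have h : F1 y ≤ F y := by rw [hsum y]; exact le_self_add
    dsimp only
    gcongr
  have hq2 : ∫⁻ y, F2 y ^ q y ≤ 1 := by
    refine le_trans (lintegral_mono fun y => ?_) hFq
    have := hq y
    have h : F2 y ≤ F y := by rw [hsum y]; exact le_add_self
    dsimp only
    gcongr
  have hF2F : ∀ y, F2 y ≤ F2 y ^ q y := by
    intro y
    simp only [hF2]
    split_ifs with h
    · exact zero_le
    · exact ENNReal.le_rpow_self_of_one_le (not_le.1 h).le (hq y)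
  have hkm : ∀ x, Measurable fun y => kerE n t m (x - y) := fun x =>
    (kerE_meas n t m).comp (measurable_const.sub measurable_id)
  have hA := hC1 t ht F1 hF1m hF1le hq1 T hT1
  have hAm : Measurable fun x => ∫⁻ y, kerE n t m (x - y) * F1 y := by
    apply Measurable.lintegral_prod_right'
      (f := fun z : Esp n × Esp n => kerE n t m (z.1 - z.2) * F1 z.2)
    exact (kerE_meas2 n t m).mul (hF1m.comp measurable_snd)
  have hdec1 : ∀ x, ∫⁻ y, kerE n t m (x - y) * F y =
      (∫⁻ y, kerE n t m (x - y) * F1 y) + ∫⁻ y, kerE n t m (x - y) * F2 y := by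
    intro x
    have := hkm x
    rw [← lintegral_add_left (by fun_prop)]
    refine lintegral_congr fun y => ?_
    rw [hsum y, mul_add]
  simp_rw [hdec1]
  refine (pow_sum_int n q hqm hq Q hqQ _ _ hAm T).trans ?_
  gcongr
  rcases le_or_gt t 1 with ht1 | ht1
  · set kf : Esp n → Esp n → ℝ≥0∞ :=
      fun x y => if ‖x - y‖ ≤ ρ then 0 else kerE n t m (x - y) with hkf
    have hB := hC2 t ht F2 hF2m hF2F hq2 T (hT2 ht1)
    have htn : 1 ≤ ENNReal.ofReal (t ^ (-(n:ℝ))) := by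
      rw [← ENNReal.ofReal_one]
      apply ENNReal.ofReal_le_ofReal
      exact Real.one_le_rpow_of_pos_of_le_one_of_nonpos ht ht1 (by simp)
    have hD := hC3 t ht F2 hF2m hF2F hq2 T hT1 kf
      (by
        intro x y
        simp only [hkf]
        split_ifs
        · exact zero_le
        · exact le_rfl)
      (by
        intro x y
        simp only [hkf]
        split_ifs with h
        · exact zero_le
        · rw [min_eq_left htn, mul_one]
          exact (kerE_far n t m ρ hm ht ht1 hρ _ (not_le.1 h)).trans (le_max_right _ _))
    have hNm : Measurable fun x => ∫⁻ y, kerNear n t m ρ x y * F2 y := by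
      apply Measurable.lintegral_prod_right'
        (f := fun z : Esp n × Esp n => kerNear n t m ρ z.1 z.2 * F2 z.2)
      exact (kerNear_meas2 n t m ρ).mul (hF2m.comp measurable_snd)
    have hdec2 : ∀ x, ∫⁻ y, kerE n t m (x - y) * F2 y =
        (∫⁻ y, kerNear n t m ρ x y * F2 y) + ∫⁻ y, kf x y * F2 y := by
      intro x
      have := kerNear_meas n t m ρ x
      rw [← lintegral_add_left (by fun_prop)]
      refine lintegral_congr fun y => ?_
      simp only [hkf, kerNear]
      split_ifs <;> simp
    simp_rw [hdec2]
    refine (pow_sum_int n q hqm hq Q hqQ _ _ hNm T).trans ?_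
    gcongr
  · have htn : ENNReal.ofReal (t ^ (-(n:ℝ))) ≤ 1 := by
      rw [← ENNReal.ofReal_one]
      apply ENNReal.ofReal_le_ofReal
      exact Real.rpow_le_one_of_one_le_of_nonpos ht1.le (by simp)
    have hD := hC3 t ht F2 hF2m hF2F hq2 T hT1 (fun x y => kerE n t m (x - y))
      (fun _ _ => le_rfl)
      (by
        intro x y
        rw [min_eq_right htn]
        calc _ ≤ _ := kerE_le n t m ht hm0.le _
          _ = 1 * ENNReal.ofReal (t ^ (-(n:ℝ))) := (one_mul _).symm
          _ ≤ _ := by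
            gcongr
            exact le_max_left _ _)
    refine hD.trans ?_
    calc C3 ≤ C2 + C3 := le_add_self
      _ = 1 * (C2 + C3) := (one_mul _).symm
      _ ≤ _ := by gcongr

lemma exp_cont (n : ℕ) (p : Esp n → ℝ) (hp1 : ∀ x, 1 ≤ p x) (c : ℝ)
    (hlog : ∀ x y : Esp n, |1 / p x - 1 / p y| ≤ c / Real.log (Real.exp 1 + 1 / ‖x - y‖)) :
    Continuous p := by
  have h1 : Continuous fun x => 1 / p x := by
    rw [continuous_iff_continuousAt]
    intro x
    rw [← continuousWithinAt_compl_self]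
    unfold ContinuousWithinAt
    rw [tendsto_iff_norm_sub_tendsto_zero]
    have h2 : Tendsto (fun y : Esp n => c / Real.log (Real.exp 1 + 1 / ‖y - x‖))
        (nhdsWithin x {x}ᶜ) (nhds 0) := by
      apply Tendsto.const_div_atTop
      apply Real.tendsto_log_atTop.comp
      apply tendsto_atTop_add_const_left
      simp_rw [one_div]
      apply tendsto_inv_nhdsGT_zero.comp
      exact tendsto_norm_sub_self_nhdsNE x
    refine squeeze_zero (fun _ => norm_nonneg _) (fun y => ?_) h2
    exact hlog y x
  have h3 : p = fun x => (1 / p x)⁻¹ := by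
    funext x; simp
  rw [h3]
  apply h1.inv₀
  intro x
  have := hp1 x
  positivity

lemma le_of_ae_le (n : ℕ) (f g : Esp n → ℝ) (hf : Continuous f) (hg : Continuous g)
    (h : ∀ᵐ x ∂(volume : Measure (Esp n)), f x ≤ g x) (x : Esp n) : f x ≤ g x := by
  have h1 := Measure.dense_of_ae h
  have h2 : IsClosed {x | f x ≤ g x} := isClosed_le hf hg
  have h3 := h1.closure_eq
  rw [h2.closure_eq] at h3
  have : x ∈ {x | f x ≤ g x} := by rw [h3]; trivial
  exact this

/-- The exponent for small `t` is at least `1 / p⁻`. -/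
lemma theta_small (pm pinf : ℝ) (h2 : 2 ≤ pm) (h : pm ≤ pinf) :
    1 / pm ≤ (2 / pm - 1 / pinf) *
      ((2 + pinf * (1 - 2 / pm)) / (1 + pinf * (1 - 2 / pm)) - 1 / (pinf - 1)) := by
  have hpm : 0 < pm := by linarith
  have hpi : 0 < pinf := by linarith
  have hd : 0 ≤ 1 - 2 / pm := by
    rw [sub_nonneg, div_le_one hpm]; exact h2
  set d := pinf * (1 - 2 / pm) with hdd
  have hd0 : 0 ≤ d := by positivity
  have hd1 : 1 + d ≤ pinf - 1 := by
    have : 2 ≤ pinf * (2 / pm) := by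
      rw [mul_div_assoc', le_div_iff₀ hpm]; linarith
    rw [hdd]; linarith
  have h3 : 1 / (pinf - 1) ≤ 1 / (1 + d) := one_div_le_one_div_of_le (by linarith) hd1
  have h4 : (2 + d) / (1 + d) = 1 + 1 / (1 + d) := by
    field_simp; ring
  have h5 : 1 / pinf ≤ 1 / pm := one_div_le_one_div_of_le hpm h
  have h6 : 2 / pm = 2 * (1 / pm) := by ring
  have h7 : 0 < 1 / pm := by positivity
  have h8 : 1 / pm ≤ 2 / pm - 1 / pinf := by linarith
  calc 1 / pm ≤ 2 / pm - 1 / pinf := h8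
    _ = (2 / pm - 1 / pinf) * 1 := (mul_one _).symm
    _ ≤ _ := mul_le_mul_of_nonneg_left (by rw [h4]; linarith) (by linarith)

/-- The exponent for large `t` is at most `1 / p_∞`. -/
lemma theta_large (pm pinf : ℝ) (h2 : 2 ≤ pm) (h : pm ≤ pinf) :
    (1 / pinf) * ((pinf * (1 - 2 / pm)) / (1 + pinf * (1 - 2 / pm)) + 1 / (pinf - 1)) ≤
      1 / pinf := by
  have hpm : 0 < pm := by linarith
  have hpi : 0 < pinf := by linarith
  have hd : 0 ≤ 1 - 2 / pm := by
    rw [sub_nonneg, div_le_one hpm]; exact h2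
  set d := pinf * (1 - 2 / pm) with hdd
  have hd0 : 0 ≤ d := by positivity
  have hd1 : 1 + d ≤ pinf - 1 := by
    have : 2 ≤ pinf * (2 / pm) := by
      rw [mul_div_assoc', le_div_iff₀ hpm]; linarith
    rw [hdd]; linarith
  have h3 : 1 / (pinf - 1) ≤ 1 / (1 + d) := one_div_le_one_div_of_le (by linarith) hd1
  have h4 : d / (1 + d) = 1 - 1 / (1 + d) := by
    field_simp; ring
  calc _ ≤ (1 / pinf) * 1 :=
        mul_le_mul_of_nonneg_left (by rw [h4]; linarith) (by positivity)
    _ = _ := mul_one _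

/-- Passing from the modular estimate to the Luxemburg norm. -/
lemma lux_step (n : ℕ) (m : ℝ) (p : Esp n → ℝ) (hp1 : ∀ x, 1 ≤ p x) (C0 : ℝ≥0∞) (C t T : ℝ)
    (hC : 1 ≤ C) (hC0 : C0 ≤ ENNReal.ofReal C) (hT : 0 < T) (ht : 0 < t)
    (hmain : ∀ F : Esp n → ℝ≥0∞, Measurable F → ∫⁻ y, F y ^ (p y / 2) ≤ 1 →
      ∫⁻ x, ((∫⁻ y, kerE n t m (x - y) * F y) / ENNReal.ofReal T) ^ (p x) ≤ C0)
    (f : Esp n → ℝ) (hf : MemVLp n (fun x => p x / 2) f) :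
    luxNorm n p (convR n (etaKer n t m) f) ≤ C * T * luxNorm n (fun x => p x / 2) f := by
  have hC' : 0 < C := by linarith
  obtain ⟨hfm, lam0, hlam0, hlam0'⟩ := hf
  have step : ∀ mu : ℝ, 0 < mu → vMod n (fun x => p x / 2) (fun x => f x / mu) ≤ 1 →
      luxNorm n p (convR n (etaKer n t m) f) ≤ C * T * mu := by
    intro mu hmu hmod
    unfold luxNorm
    apply csInf_le ⟨0, fun _ h => h.1.le⟩
    refine ⟨by positivity, ?_⟩
    unfold vMod at hmod ⊢
    have hF0 : AEMeasurable (fun y => ENNReal.ofReal |f y / mu|) (volume : Measure (Esp n)) :=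
      ((continuous_abs.measurable.comp_aemeasurable (hfm.div_const mu))).ennreal_ofReal
    set F := hF0.mk _ with hF
    have hFm : Measurable F := hF0.measurable_mk
    have hFe := hF0.ae_eq_mk
    have hF1 : ∫⁻ y, F y ^ (p y / 2) ≤ 1 := by
      refine le_trans (le_of_eq ?_) hmod
      apply lintegral_congr_ae
      filter_upwards [hFe] with y hy
      rw [hy]
    have hm1 := hmain F hFm hF1
    have hpt : ∀ x, (ENNReal.ofReal |convR n (etaKer n t m) f x / (C * T * mu)|) ^ (p x) ≤
        (ENNReal.ofReal C)⁻¹ *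
          ((∫⁻ y, kerE n t m (x - y) * F y) / ENNReal.ofReal T) ^ (p x) := by
      intro x
      have hpx := hp1 x
      have h1 : ENNReal.ofReal |convR n (etaKer n t m) f x| ≤
          ENNReal.ofReal mu * ∫⁻ y, kerE n t m (x - y) * F y := by
        rw [← Real.enorm_eq_ofReal_abs]
        unfold convR
        refine (enorm_integral_le_lintegral_enorm _).trans (le_of_eq ?_)
        rw [← lintegral_const_mul' _ _ ENNReal.ofReal_ne_top]
        apply lintegral_congr_ae
        filter_upwards [hFe] with y hy
        rw [show F y = ENNReal.ofReal |f y / mu| from hy.symm]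
        unfold kerE
        have he : 0 ≤ etaKer n t m (x - y) := by unfold etaKer; positivity
        rw [← ENNReal.ofReal_mul he, ← ENNReal.ofReal_mul hmu.le, Real.enorm_eq_ofReal_abs,
          abs_mul, abs_of_nonneg he, abs_div, abs_of_pos hmu]
        congr 1
        field_simp
      have h2 : ENNReal.ofReal |convR n (etaKer n t m) f x / (C * T * mu)| ≤
          (ENNReal.ofReal C)⁻¹ * ((∫⁻ y, kerE n t m (x - y) * F y) / ENNReal.ofReal T) := by
        have hpos : 0 < C * T * mu := by positivity
        rw [abs_div, abs_of_pos hpos, ENNReal.ofReal_div_of_pos hpos]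
        apply ENNReal.div_le_of_le_mul
        refine h1.trans (le_of_eq ?_)
        rw [ENNReal.ofReal_mul (by positivity), ENNReal.ofReal_mul hC'.le]
        have a1 : (ENNReal.ofReal C)⁻¹ * ENNReal.ofReal C = 1 :=
          ENNReal.inv_mul_cancel (by simpa using hC') ENNReal.ofReal_ne_top
        have a2 : (ENNReal.ofReal T)⁻¹ * ENNReal.ofReal T = 1 :=
          ENNReal.inv_mul_cancel (by simpa using hT) ENNReal.ofReal_ne_top
        set I := ∫⁻ y, kerE n t m (x - y) * F y
        calc ENNReal.ofReal mu * I = ENNReal.ofReal mu * I *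
              ((ENNReal.ofReal C)⁻¹ * ENNReal.ofReal C) *
              ((ENNReal.ofReal T)⁻¹ * ENNReal.ofReal T) := by rw [a1, a2, mul_one, mul_one]
          _ = _ := by rw [div_eq_mul_inv]; ring
      calc _ ≤ ((ENNReal.ofReal C)⁻¹ *
            ((∫⁻ y, kerE n t m (x - y) * F y) / ENNReal.ofReal T)) ^ (p x) := by gcongr
        _ = ((ENNReal.ofReal C)⁻¹) ^ (p x) *
            ((∫⁻ y, kerE n t m (x - y) * F y) / ENNReal.ofReal T) ^ (p x) :=
          ENNReal.mul_rpow_of_nonneg _ _ (by linarith)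
        _ ≤ _ := by
          gcongr
          apply ENNReal.rpow_le_self_of_le_one _ hpx
          rw [ENNReal.inv_le_one, ← ENNReal.ofReal_one]
          exact ENNReal.ofReal_le_ofReal hC
    have hCi : (ENNReal.ofReal C)⁻¹ ≠ ∞ := by simpa using hC'
    calc _ ≤ ∫⁻ x, (ENNReal.ofReal C)⁻¹ *
          ((∫⁻ y, kerE n t m (x - y) * F y) / ENNReal.ofReal T) ^ (p x) := lintegral_mono hpt
      _ = (ENNReal.ofReal C)⁻¹ *
          ∫⁻ x, ((∫⁻ y, kerE n t m (x - y) * F y) / ENNReal.ofReal T) ^ (p x) :=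
        lintegral_const_mul' _ _ hCi
      _ ≤ (ENNReal.ofReal C)⁻¹ * ENNReal.ofReal C := by
        gcongr
        exact hm1.trans hC0
      _ = 1 := ENNReal.inv_mul_cancel (by simpa using hC') ENNReal.ofReal_ne_top
  rw [← div_le_iff₀' (by positivity)]
  refine le_csInf (s := {lam : ℝ | 0 < lam ∧
    vMod n (fun x => p x / 2) (fun x => f x / lam) ≤ 1}) ⟨lam0, hlam0, hlam0'⟩ ?_
  rintro mu ⟨hmu, hmod⟩
  rw [div_le_iff₀' (by positivity)]
  exact step mu hmu hmod

/-- Lemma 3.2 of the paper: `‖η_{t,m} * f‖_{L^{p(·)}} ≤ C t^{-nϑ(t)} ‖f‖_{L^{p(·)/2}}` for a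
globally log-Hölder exponent `p` with `2 ≤ p⁻ ≤ p⁺ < ∞` and `p⁺ = p_∞`. -/
theorem statement0 (n : ℕ) (hn : 1 ≤ n) (m : ℝ) (hm : (n : ℝ) < m)
    (p : Esp n → ℝ) (hpmeas : Measurable p) (hp1 : ∀ x, 1 ≤ p x)
    (pm pinf : ℝ) (hpm : pm = essInf p volume) (hpinf : pinf = essSup p volume)
    (hbdd : IsBoundedUnder (· ≤ ·) (ae (volume : Measure (Esp n))) p)
    (hlog : IsLogHolder n p (1 / pinf))
    (h2 : 2 ≤ pm) :
    ∃ C : ℝ, 0 < C ∧ ∀ t : ℝ, 0 < t → ∀ f : Esp n → ℝ,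
      MemVLp n (fun x => p x / 2) f →
      luxNorm n p (convR n (etaKer n t m) f) ≤
        C * t ^ (-(n : ℝ) *
          (if t ≤ 1 then
            (2 / pm - 1 / pinf) *
              ((2 + pinf * (1 - 2 / pm)) / (1 + pinf * (1 - 2 / pm)) - 1 / (pinf - 1))
          else
            (1 / pinf) *
              ((pinf * (1 - 2 / pm)) / (1 + pinf * (1 - 2 / pm)) + 1 / (pinf - 1)))) *
        luxNorm n (fun x => p x / 2) f := by
  obtain ⟨c, hc, hl1, hl2⟩ := hlog
  have hcont := exp_cont n p hp1 c hl1
  have hbelow : IsBoundedUnder (· ≥ ·) (ae (volume : Measure (Esp n))) p :=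
    ⟨1, by
      rw [eventually_map]
      exact Eventually.of_forall hp1⟩
  have hle : ∀ x, p x ≤ pinf := le_of_ae_le n p (fun _ => pinf) hcont continuous_const
    (by rw [hpinf]; exact ae_le_essSup hbdd)
  have hge : ∀ x, pm ≤ p x := le_of_ae_le n (fun _ => pm) p continuous_const hcont
    (by rw [hpm]; exact ae_essInf_le hbelow)
  clear hpm hpinf
  have hpp : pm ≤ pinf := (hge 0).trans (hle 0)
  have hpi : 0 < pinf := by linarith
  have hpm0 : 0 < pm := by linarith
  have hn0 : (0:ℝ) ≤ n := Nat.cast_nonneg n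
  obtain ⟨C0, hC0t, hC0⟩ := main_mod n hn m hm (fun x => p x / 2) (hpmeas.div_const 2)
    (fun x => by linarith [hge x]) (pinf / 2) (2 * c) (fun x => by linarith [hle x])
    (by positivity)
    (fun x y => by
      have h := hl1 x y
      have e : 1 / (p x / 2) - 1 / (p y / 2) = 2 * (1 / p x - 1 / p y) := by
        simp only [one_div_div]; ring
      rw [e, abs_mul, abs_two, mul_div_assoc]
      gcongr)
    (fun x => by
      have h := hl2 x
      have e : 1 / (p x / 2) - 1 / (pinf / 2) = 2 * (1 / p x - 1 / pinf) := by
        simp only [one_div_div]; ring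
      rw [e, abs_mul, abs_two, mul_div_assoc]
      gcongr)
  refine ⟨max 1 C0.toReal, by positivity, ?_⟩
  intro t ht f hf
  apply lux_step n m p hp1 C0 (max 1 C0.toReal) t _ (le_max_left _ _) _ (by positivity) ht _ f hf
  · rw [ENNReal.le_ofReal_iff_toReal_le hC0t (by positivity)]
    exact le_max_right _ _
  intro F hF hF1
  have e2 : ∀ x, 2 * (p x / 2) = p x := fun x => by ring
  have hres := hC0 t ht F hF hF1
  simp only [e2] at hres
  apply hres
  · rw [← ENNReal.ofReal_pow (by positivity)]
    split_ifs with ht1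
    · calc _ ≤ (1 : ℝ≥0∞) := ENNReal.rpow_le_one (min_le_left _ _) (by positivity)
        _ ≤ _ := by
          rw [← ENNReal.ofReal_one]
          apply ENNReal.ofReal_le_ofReal
          apply one_le_pow₀
          apply Real.one_le_rpow_of_pos_of_le_one_of_nonpos ht ht1
          have h3 := theta_small pm pinf h2 hpp
          have h4 : 0 < 1 / pm := by positivity
          exact mul_nonpos_of_nonpos_of_nonneg (by linarith) (by linarith)
    · have ht1' : 1 ≤ t := (not_le.1 ht1).le
      calc _ ≤ (ENNReal.ofReal (t ^ (-(n:ℝ)))) ^ (1 / (pinf / 2)) := by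
            gcongr
            exact min_le_right _ _
        _ ≤ _ := by
          rw [ENNReal.ofReal_rpow_of_pos (by positivity)]
          apply ENNReal.ofReal_le_ofReal
          rw [← Real.rpow_mul ht.le, ← Real.rpow_natCast, ← Real.rpow_mul ht.le]
          apply Real.rpow_le_rpow_of_exponent_le ht1'
          have h3 := theta_large pm pinf h2 hpp
          have h4 : 1 / (pinf / 2) = 2 * (1 / pinf) := by field_simp
          rw [h4]
          push_cast
          nlinarith [mul_le_mul_of_nonneg_left h3 hn0]
  · intro ht1 x
    rw [if_pos ht1, ENNReal.ofReal_rpow_of_pos (by positivity)]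
    apply ENNReal.ofReal_le_ofReal
    rw [← Real.rpow_mul ht.le]
    apply Real.rpow_le_rpow_of_exponent_ge ht ht1
    have h3 := theta_small pm pinf h2 hpp
    set θ := (2 / pm - 1 / pinf) *
      ((2 + pinf * (1 - 2 / pm)) / (1 + pinf * (1 - 2 / pm)) - 1 / (pinf - 1))
    have h4 : 1 ≤ θ * p x := by
      calc 1 = (1 / pm) * pm := by field_simp
        _ ≤ θ * p x := by
          have := hge x
          have : 0 < 1 / pm := by positivity
          gcongr
          linarith
    nlinarith [mul_le_mul_of_nonneg_left h4 hn0]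
end
end

section
/- Let n ≥ 1, m > n, and let p : ℝ^n → [1,∞) be a measurable exponent (possibly unbounded) with p ∈ P^log(ℝ^n), 2 ≤ p⁻, and p_∞ = ∞ (i.e. the log-Hölder decay condition holds with limit value 1/p_∞ = 0). Define ϑ(t) = 2/p⁻ for 0 < t ≤ 1 and ϑ(t) = 0 for t > 1. Then there exists a constant C > 0, depending only on p, m and n, such that for every t > 0 and every f ∈ L^{p(·)/2}(ℝ^n), ‖η_{t,m} * f‖_{L^{p(·)}(ℝ^n)} ≤ C t^{−nϑ(t)} ‖f‖_{L^{p(·)/2}(ℝ^n)}. -/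
open MeasureTheory Filter Real
open scoped ENNReal

noncomputable section

lemma aux_dich (n : ℕ) (m t : ℝ) (hn : 1 ≤ n) (hm : (n : ℝ) < m) (ht : 0 < t) (z : Esp n) :
    etaKer n t m z ≤ 1 ∨ (t < 1 ∧ ‖z‖ ≤ t ^ ((m - n) / m)) := by
  have hn1 : (1 : ℝ) ≤ n := by exact_mod_cast hn
  have hm0 : 0 < m := by linarith
  have hz : 0 ≤ ‖z‖ / t := by positivity
  by_cases h1 : 1 ≤ t
  · left
    unfold etaKer
    have a1 : t ^ (-(n : ℝ)) ≤ 1 := Real.rpow_le_one_of_one_le_of_nonpos h1 (by linarith)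
    have a2 : (1 + ‖z‖ / t) ^ (-m) ≤ 1 :=
      Real.rpow_le_one_of_one_le_of_nonpos (by linarith) (by linarith)
    exact mul_le_one₀ a1 (by positivity) a2
  · push Not at h1
    by_cases h3 : ‖z‖ ≤ t ^ ((m - n) / m)
    · right; exact ⟨h1, h3⟩
    · left
      push Not at h3
      unfold etaKer
      have b1 : t ^ ((m - n) / m - 1) ≤ 1 + ‖z‖ / t := by
        rw [Real.rpow_sub_one ht.ne']
        have : t ^ ((m - n) / m) / t ≤ ‖z‖ / t := by gcongr
        linarith
      have b2 : (1 + ‖z‖ / t) ^ (-m) ≤ (t ^ ((m - n) / m - 1)) ^ (-m) :=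
        Real.rpow_le_rpow_of_nonpos (by positivity) b1 (by linarith)
      rw [← Real.rpow_mul ht.le] at b2
      have e : ((m - n) / m - 1) * (-m) = n := by field_simp; ring
      rw [e] at b2
      calc t ^ (-(n : ℝ)) * (1 + ‖z‖ / t) ^ (-m) ≤ t ^ (-(n : ℝ)) * t ^ (n : ℝ) := by gcongr
        _ = 1 := by rw [← Real.rpow_add ht]; simp

lemma aux_holder (n : ℕ) (m t : ℝ) (hn : 1 ≤ n) (hm : (n : ℝ) < m) (ht : 0 < t) (ht1 : t < 1)
    (d : ℝ) (hd : 0 < d) (hdt : d ≤ t ^ ((m - n) / m)) (c : ℝ) (hc : 0 < c) (u v : ℝ)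
    (huv : |u - v| ≤ c / Real.log (Real.exp 1 + 1 / d)) (a : ℝ) (ha : 1 ≤ a)
    (hat : a ≤ t ^ (-(n : ℝ))) :
    a ^ (2 * v) ≤ Real.exp (2 * c * n / ((m - n) / m)) * a ^ (2 * u) := by
  have hn1 : (1 : ℝ) ≤ n := by exact_mod_cast hn
  have hm0 : 0 < m := by linarith
  set al := (m - n) / m with hal
  have hal0 : 0 < al := div_pos (by linarith) hm0
  have hlt : 0 < - Real.log t := by have := Real.log_neg ht ht1; linarith
  have hla : Real.log a ≤ n * (- Real.log t) := by
    have := Real.log_le_log (by linarith) hat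
    rw [Real.log_rpow ht] at this; linarith
  have hla0 : 0 ≤ Real.log a := Real.log_nonneg ha
  have hlog : al * (- Real.log t) ≤ Real.log (Real.exp 1 + 1 / d) := by
    have h1 : Real.log d ≤ al * Real.log t := by
      have := Real.log_le_log hd hdt
      rwa [Real.log_rpow ht] at this
    have h2 : Real.log (1 / d) ≤ Real.log (Real.exp 1 + 1 / d) :=
      Real.log_le_log (by positivity) (by have := Real.exp_pos 1; linarith)
    rw [one_div, Real.log_inv, ← one_div] at h2
    linarith
  have hw : v - u ≤ c / (al * (- Real.log t)) := by
    have h1 := abs_le.1 huv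
    have h2 : c / Real.log (Real.exp 1 + 1 / d) ≤ c / (al * (- Real.log t)) := by
      apply div_le_div_of_nonneg_left hc.le (by positivity) hlog
    linarith [h1.1]
  have key : Real.log a * (v - u) ≤ c * n / al := by
    calc Real.log a * (v - u) ≤ Real.log a * (c / (al * (- Real.log t))) := by gcongr
      _ ≤ (n * (- Real.log t)) * (c / (al * (- Real.log t))) := by gcongr
      _ = c * n / al := by
        have hne : Real.log t ≠ 0 := fun h => by rw [h] at hlt; simp at hlt
        field_simp
  have ha0 : 0 < a := by linarith
  rw [Real.rpow_def_of_pos ha0, Real.rpow_def_of_pos ha0, ← Real.exp_add]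
  apply Real.exp_le_exp.2
  have : 2 * c * n / al = 2 * (c * n / al) := by ring
  rw [this]; linarith

lemma aux_young (F a q : ℝ) (hF : 0 ≤ F) (ha : 1 ≤ a) (hq : 1 ≤ q) :
    F ≤ a ^ (1 / q) * (1 + F ^ q / a) := by
  have ha0 : 0 < a := by linarith
  have hA : 0 < a ^ (1 / q) := by positivity
  have e : (F / a ^ (1 / q)) ^ q = F ^ q / a := by
    rw [Real.div_rpow hF hA.le, ← Real.rpow_mul ha0.le, one_div_mul_cancel (by linarith),
      Real.rpow_one]
  have s : F / a ^ (1 / q) ≤ 1 + F ^ q / a := by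
    rw [← e]
    set s := F / a ^ (1 / q)
    have hs : 0 ≤ s := by positivity
    by_cases h : s ≤ 1
    · have : 0 ≤ s ^ q := by positivity
      linarith
    · have := Real.self_le_rpow_of_one_le (le_of_not_ge h) hq
      linarith
  rwa [div_le_iff₀' hA] at s

lemma eta_nonneg (n : ℕ) (m t : ℝ) (ht : 0 < t) (z : Esp n) : 0 ≤ etaKer n t m z := by
  unfold etaKer; positivity

lemma eta_le (n : ℕ) (m t : ℝ) (hm : 0 < m) (ht : 0 < t) (z : Esp n) :
    etaKer n t m z ≤ t ^ (-(n : ℝ)) := by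
  unfold etaKer
  have hz : 0 ≤ ‖z‖ / t := by positivity
  exact mul_le_of_le_one_right (by positivity)
    (Real.rpow_le_one_of_one_le_of_nonpos (by linarith) (by linarith))

lemma eta_meas (n : ℕ) (m t : ℝ) : Measurable (etaKer n t m) := by
  unfold etaKer; fun_prop

lemma eta_lint (n : ℕ) (m t : ℝ) (hm : (n : ℝ) < m) (ht : 0 < t) :
    ∫⁻ z, ENNReal.ofReal (etaKer n t m z) =
      ENNReal.ofReal (∫ z : Esp n, (1 + ‖z‖) ^ (-m)) := by
  have hi : Integrable (fun z : Esp n => (1 + ‖z‖) ^ (-m)) volume :=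
    integrable_one_add_norm (by simpa using hm)
  have e : ∀ z : Esp n, etaKer n t m z = t ^ (-(n : ℝ)) * (1 + ‖t⁻¹ • z‖) ^ (-m) := by
    intro z
    unfold etaKer
    rw [norm_smul, Real.norm_of_nonneg (by positivity), div_eq_inv_mul]
  have hi2 : Integrable (etaKer n t m) volume := by
    rw [funext e]
    exact (hi.comp_smul (inv_ne_zero ht.ne')).const_mul _
  rw [← ofReal_integral_eq_lintegral_ofReal hi2 (ae_of_all _ (eta_nonneg n m t ht))]
  congr 1
  simp_rw [e]
  rw [integral_const_mul, Measure.integral_comp_inv_smul volume (fun z : Esp n => (1 + ‖z‖) ^ (-m))]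
  rw [smul_eq_mul, ← mul_assoc, abs_of_pos (by positivity)]
  simp [Real.rpow_neg ht.le, ht.ne']

/-- Auxiliary: the averaged modular density. -/
def avM (n : ℕ) (t m : ℝ) (p f : Esp n → ℝ) (x : Esp n) : ℝ≥0∞ :=
  ∫⁻ y, ENNReal.ofReal (etaKer n t m (x - y)) * ENNReal.ofReal (|f y| ^ (p y / 2))

lemma avM_le (n : ℕ) (m t : ℝ) (hm : 0 < m) (ht : 0 < t) (p f : Esp n → ℝ)
    (hf : ∫⁻ y, ENNReal.ofReal (|f y| ^ (p y / 2)) ≤ 1) (x : Esp n) :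
    avM n t m p f x ≤ ENNReal.ofReal (t ^ (-(n : ℝ))) := by
  unfold avM
  calc _ ≤ ∫⁻ y, ENNReal.ofReal (t ^ (-(n : ℝ))) * ENNReal.ofReal (|f y| ^ (p y / 2)) := by
        apply lintegral_mono
        intro y
        dsimp only
        gcongr
        exact eta_le n m t hm ht _
    _ = ENNReal.ofReal (t ^ (-(n : ℝ))) * ∫⁻ y, ENNReal.ofReal (|f y| ^ (p y / 2)) :=
        lintegral_const_mul' _ _ ENNReal.ofReal_ne_top
    _ ≤ _ := mul_le_of_le_one_right' hf

lemma dens_meas (n : ℕ) (p f : Esp n → ℝ) (hp : Measurable p) (hfm : AEMeasurable f volume) :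
    AEMeasurable (fun y => ENNReal.ofReal (|f y| ^ (p y / 2))) volume := by
  have : AEMeasurable (fun y => |f y|) volume := by
    simpa only [Real.norm_eq_abs] using hfm.norm
  exact (this.pow (hp.div_const 2).aemeasurable).ennreal_ofReal

lemma avM_lint (n : ℕ) (m t : ℝ) (hm : (n : ℝ) < m) (ht : 0 < t) (p f : Esp n → ℝ)
    (hp : Measurable p) (hfm : AEMeasurable f volume)
    (hf : ∫⁻ y, ENNReal.ofReal (|f y| ^ (p y / 2)) ≤ 1) :
    ∫⁻ x, avM n t m p f x ≤ ENNReal.ofReal (∫ z : Esp n, (1 + ‖z‖) ^ (-m)) := by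
  unfold avM
  have hmeas := dens_meas n p f hp hfm
  have hem := eta_meas n m t
  rw [lintegral_lintegral_swap]
  · calc _ = ∫⁻ y, ENNReal.ofReal (∫ z : Esp n, (1 + ‖z‖) ^ (-m)) *
          ENNReal.ofReal (|f y| ^ (p y / 2)) := by
          congr 1
          ext y
          rw [lintegral_mul_const' _ _ ENNReal.ofReal_ne_top,
            lintegral_sub_right_eq_self (fun z => ENNReal.ofReal (etaKer n t m z)),
            eta_lint n m t hm ht]
      _ = _ * ∫⁻ y, ENNReal.ofReal (|f y| ^ (p y / 2)) :=
          lintegral_const_mul' _ _ ENNReal.ofReal_ne_top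
      _ ≤ _ := mul_le_of_le_one_right' hf
  · refine AEMeasurable.mul (f := fun z : Esp n × Esp n => ENNReal.ofReal (etaKer n t m (z.1 - z.2)))
      (g := fun z : Esp n × Esp n => ENNReal.ofReal (|f z.2| ^ (p z.2 / 2))) ?_ ?_
    · exact (hem.comp (measurable_fst.sub measurable_snd)).ennreal_ofReal.aemeasurable
    · exact hmeas.comp_snd

lemma conv_bound (n : ℕ) (m t : ℝ) (hn : 1 ≤ n) (hm : (n : ℝ) < m) (ht : 0 < t)
    (p f : Esp n → ℝ) (hp : Measurable p) (hfm : AEMeasurable f volume) (hp2 : ∀ᵐ x, 2 ≤ p x) (c : ℝ) (hc : 0 < c)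
    (hlog : ∀ x y : Esp n, |1 / p x - 1 / p y| ≤ c / Real.log (Real.exp 1 + 1 / ‖x - y‖))
    (hf : ∫⁻ y, ENNReal.ofReal (|f y| ^ (p y / 2)) ≤ 1) (x : Esp n) (hpx : 2 ≤ p x) :
    |convR n (etaKer n t m) f x| ≤ (Real.exp (2 * c * n / ((m - n) / m)) + 1) *
      ((∫ z : Esp n, (1 + ‖z‖) ^ (-m)) + 1) *
      (max 1 (avM n t m p f x).toReal) ^ (2 / p x) := by
  have hn1 : (1 : ℝ) ≤ n := by exact_mod_cast hn
  have hm0 : 0 < m := by linarith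
  set K := Real.exp (2 * c * n / ((m - n) / m)) with hK
  set I := ∫ z : Esp n, (1 + ‖z‖) ^ (-m) with hI
  set M := avM n t m p f x with hM
  set a := max 1 M.toReal with ha
  have hI0 : 0 ≤ I := integral_nonneg (fun z => by positivity)
  have hK1 : 1 ≤ K := Real.one_le_exp (by
    have : 0 < m - n := by linarith
    positivity)
  have ha1 : 1 ≤ a := le_max_left _ _
  have ha0 : 0 < a := by linarith
  have hMle := avM_le n m t hm0 ht p f hf x
  rw [← hM] at hMle
  have hMtop : M ≠ ⊤ := ne_top_of_le_ne_top ENNReal.ofReal_ne_top hMle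
  have hMr : M.toReal ≤ t ^ (-(n : ℝ)) := ENNReal.toReal_le_of_le_ofReal (by positivity) hMle
  set A := a ^ (2 / p x) with hA
  have hA1 : 1 ≤ A := Real.one_le_rpow ha1 (by positivity)
  have hA0 : 0 < A := by linarith
  -- pointwise bound
  have hpt : ∀ᵐ y, ENNReal.ofReal (etaKer n t m (x - y)) * ENNReal.ofReal |f y| ≤
      ENNReal.ofReal (K * A) * (ENNReal.ofReal (etaKer n t m (x - y)) +
        ENNReal.ofReal (1 / a) * (ENNReal.ofReal (etaKer n t m (x - y)) *
          ENNReal.ofReal (|f y| ^ (p y / 2)))) +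
      (ENNReal.ofReal (etaKer n t m (x - y)) + ENNReal.ofReal (|f y| ^ (p y / 2))) := by
    filter_upwards [hp2] with y hy
    have he := eta_nonneg n m t ht (x - y)
    set e := etaKer n t m (x - y) with hedef
    set h := |f y| ^ (p y / 2) with hh
    have hh0 : 0 ≤ h := by positivity
    rw [← ENNReal.ofReal_mul he, ← ENNReal.ofReal_mul he, ← ENNReal.ofReal_mul (by positivity),
      ← ENNReal.ofReal_add he (by positivity), ← ENNReal.ofReal_mul (by positivity),
      ← ENNReal.ofReal_add he (by positivity), ← ENNReal.ofReal_add (by positivity) (by positivity)]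
    apply ENNReal.ofReal_le_ofReal
    rcases aux_dich n m t hn hm ht (x - y) with h1 | ⟨ht1, hd⟩
    · have y1 := aux_young |f y| 1 (p y / 2) (abs_nonneg _) le_rfl (by linarith)
      rw [Real.one_rpow, one_mul, div_one] at y1
      have : e * |f y| ≤ e + h := by
        calc e * |f y| ≤ e * (1 + h) := by gcongr
          _ = e + e * h := by ring
          _ ≤ e + 1 * h := by gcongr
          _ = e + h := by ring
      have : 0 ≤ K * A * (e + 1 / a * (e * h)) := by positivity
      linarith
    · have y1 := aux_young |f y| a (p y / 2) (abs_nonneg _) ha1 (by linarith)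
      have hat : a ≤ t ^ (-(n : ℝ)) := by
        apply max_le _ hMr
        exact Real.one_le_rpow_of_pos_of_le_one_of_nonpos ht ht1.le (by linarith)
      have y2 : a ^ (1 / (p y / 2)) ≤ K * A := by
        by_cases hxy : x = y
        · subst hxy
          rw [one_div_div]
          exact le_mul_of_one_le_left hA0.le hK1
        · have hd0 : 0 < ‖x - y‖ := norm_pos_iff.2 (sub_ne_zero.2 hxy)
          have := aux_holder n m t hn hm ht ht1 _ hd0 hd c hc (1 / p x) (1 / p y) (hlog x y) a ha1 hat
          rw [one_div_div]
          rw [mul_one_div, mul_one_div] at this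
          exact this
      have : e * |f y| ≤ K * A * (e + 1 / a * (e * h)) := by
        calc e * |f y| ≤ e * (a ^ (1 / (p y / 2)) * (1 + h / a)) := by gcongr
          _ ≤ e * (K * A * (1 + h / a)) := by gcongr
          _ = _ := by ring
      linarith
  have hem := eta_meas n m t
  have hem2 : Measurable (fun y => ENNReal.ofReal (etaKer n t m (x - y))) :=
    (hem.comp (measurable_const.sub measurable_id)).ennreal_ofReal
  have heI : ∫⁻ y, ENNReal.ofReal (etaKer n t m (x - y)) = ENNReal.ofReal I := by
    rw [lintegral_sub_left_eq_self (fun z => ENNReal.ofReal (etaKer n t m z)),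
      eta_lint n m t hm ht]
  have hint : ENNReal.ofReal |convR n (etaKer n t m) f x| ≤
      ENNReal.ofReal (K * A) * (ENNReal.ofReal I + ENNReal.ofReal (1 / a) * M) +
        (ENNReal.ofReal I + 1) := by
    calc ENNReal.ofReal |convR n (etaKer n t m) f x|
        ≤ ∫⁻ y, ENNReal.ofReal (etaKer n t m (x - y)) * ENNReal.ofReal |f y| := by
          have := enorm_integral_le_lintegral_enorm (μ := volume)
            (fun y => etaKer n t m (x - y) * f y)
          simp only [← ofReal_norm, Real.norm_eq_abs, abs_mul] at this
          refine this.trans (le_of_eq ?_)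
          congr 1
          ext y
          rw [abs_of_nonneg (eta_nonneg n m t ht _), ENNReal.ofReal_mul (eta_nonneg n m t ht _)]
      _ ≤ _ := lintegral_mono_ae hpt
      _ ≤ _ := by
          rw [lintegral_add_right' ]
          rotate_left
          · exact hem2.aemeasurable.add (dens_meas n p f hp hfm)
          rw [lintegral_const_mul' _ _ ENNReal.ofReal_ne_top, lintegral_add_left hem2,
            lintegral_add_left hem2, lintegral_const_mul' _ _ ENNReal.ofReal_ne_top, heI]
          change _ * (_ + _ * M) + _ ≤ _
          gcongr
  have hMa : ENNReal.ofReal (1 / a) * M ≤ 1 := by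
    rw [← ENNReal.ofReal_toReal hMtop, ← ENNReal.ofReal_mul (by positivity)]
    rw [ENNReal.ofReal_le_one, one_div_mul_eq_div, div_le_one ha0]
    exact le_max_right _ _
  have hfin : ENNReal.ofReal |convR n (etaKer n t m) f x| ≤
      ENNReal.ofReal (K * A * (I + 1) + (I + 1)) := by
    rw [ENNReal.ofReal_add (by positivity) (by positivity), ENNReal.ofReal_mul (by positivity),
      ENNReal.ofReal_add hI0 zero_le_one, ENNReal.ofReal_one]
    refine hint.trans ?_
    gcongr
  have := (ENNReal.ofReal_le_ofReal_iff (by positivity)).1 hfin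
  nlinarith [mul_le_mul_of_nonneg_right hA1 (by positivity : 0 ≤ I + 1)]

lemma tail_bound (n : ℕ) (m : ℝ) (hm : (n : ℝ) < m) (p : Esp n → ℝ) (hp1 : ∀ x, 1 ≤ p x)
    (c : ℝ) (hc : 0 < c)
    (hdec : ∀ x : Esp n, |1 / p x - 0| ≤ c / Real.log (Real.exp 1 + ‖x‖)) (s : ℝ) (hs : m ≤ s) :
    ∫⁻ x, ENNReal.ofReal (Real.exp (c * s) ^ (-(p x))) ≤
      ENNReal.ofReal (Real.exp (m - s) * ∫ z : Esp n, (1 + ‖z‖) ^ (-m)) := by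
  have hm0 : 0 < m := lt_of_le_of_lt (Nat.cast_nonneg n) hm
  have hi : Integrable (fun z : Esp n => (1 + ‖z‖) ^ (-m)) volume :=
    integrable_one_add_norm (by simpa using hm)
  rw [← integral_const_mul, ofReal_integral_eq_lintegral_ofReal (hi.const_mul _)
    (ae_of_all _ (fun z => by positivity))]
  apply lintegral_mono
  intro x
  apply ENNReal.ofReal_le_ofReal
  have hx : 0 ≤ ‖x‖ := norm_nonneg x
  have he : 1 < Real.exp 1 := Real.one_lt_exp_iff.2 one_pos
  have hb : 0 < Real.exp 1 + ‖x‖ := by linarith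
  have hl1 : 1 ≤ Real.log (Real.exp 1 + ‖x‖) := by
    rw [Real.le_log_iff_exp_le hb]; linarith
  have hl2 : Real.log (1 + ‖x‖) ≤ Real.log (Real.exp 1 + ‖x‖) :=
    Real.log_le_log (by linarith) (by linarith)
  set ℓ := Real.log (Real.exp 1 + ‖x‖)
  have hp0 : 0 < p x := by linarith [hp1 x]
  have h1 := hdec x
  rw [sub_zero, abs_of_pos (by positivity), div_le_div_iff₀ hp0 (by linarith)] at h1
  rw [← Real.exp_mul, Real.rpow_def_of_pos (by linarith), ← Real.exp_add]
  apply Real.exp_le_exp.2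
  nlinarith [mul_le_mul_of_nonneg_left h1 (by linarith : 0 ≤ s),
    mul_le_mul_of_nonneg_left hl1 (by linarith : 0 ≤ s - m)]

lemma exists_s (m c I : ℝ) (hc : 0 < c) :
    ∃ s : ℝ, m ≤ s ∧ 0 ≤ s ∧ Real.exp (m - s) * I ≤ 1 / 2 ∧ Real.exp (-(c * s)) * I ≤ 1 / 2 := by
  have t1 : Tendsto (fun s : ℝ => Real.exp (m - s) * I) atTop (nhds (0 * I)) := by
    apply Tendsto.mul_const
    apply Real.tendsto_exp_atBot.comp
    exact tendsto_atBot_add_const_left _ _ tendsto_neg_atTop_atBot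
  have t2 : Tendsto (fun s : ℝ => Real.exp (-(c * s)) * I) atTop (nhds (0 * I)) := by
    apply Tendsto.mul_const
    apply Real.tendsto_exp_atBot.comp
    exact tendsto_neg_atTop_atBot.comp (tendsto_id.const_mul_atTop hc)
  rw [zero_mul] at t1 t2
  have := ((eventually_ge_atTop m).and (eventually_ge_atTop (0 : ℝ))).and
    ((t1.eventually_le_const (by norm_num : (0 : ℝ) < 1 / 2)).and
      (t2.eventually_le_const (by norm_num : (0 : ℝ) < 1 / 2)))
  obtain ⟨s, ⟨h1, h2⟩, h3, h4⟩ := this.exists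
  exact ⟨s, h1, h2, h3, h4⟩

lemma pt_final (v D L T a M P : ℝ) (hv : 0 ≤ v) (hD : 0 < D) (hL : 1 ≤ L) (hT : 1 ≤ T)
    (ha0 : 0 < a) (haM : a ≤ 1 + M) (hM : 0 ≤ M) (hP : 2 ≤ P)
    (hvb : v ≤ D * a ^ (2 / P)) (haT : a ^ (2 / P) ≤ T) :
    (v / (D * L * T)) ^ P ≤ L ^ (-P) + L⁻¹ * M := by
  have hT0 : 0 < T := by linarith
  have hL0 : 0 < L := by linarith
  have hA : 0 < a ^ (2 / P) := by positivity
  have h1 : v / (D * L * T) ≤ L⁻¹ * (a ^ (2 / P) / T) := by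
    calc v / (D * L * T) ≤ D * a ^ (2 / P) / (D * L * T) := by gcongr
      _ = _ := by field_simp
  have h2 : (a ^ (2 / P) / T) ^ P ≤ a := by
    calc (a ^ (2 / P) / T) ^ P ≤ (a ^ (2 / P) / T) ^ (P / 2) :=
          Real.rpow_le_rpow_of_exponent_ge (by positivity) ((div_le_one hT0).2 haT) (by linarith)
      _ ≤ (a ^ (2 / P)) ^ (P / 2) := by
          gcongr
          exact div_le_self hA.le hT
      _ = a := by
          rw [← Real.rpow_mul ha0.le, show 2 / P * (P / 2) = 1 by field_simp, Real.rpow_one]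
  have h3 : L ^ (-P) ≤ L⁻¹ := by
    rw [← Real.rpow_neg_one]
    exact Real.rpow_le_rpow_of_exponent_le hL (by linarith)
  calc (v / (D * L * T)) ^ P ≤ (L⁻¹ * (a ^ (2 / P) / T)) ^ P := by gcongr
    _ = L ^ (-P) * (a ^ (2 / P) / T) ^ P := by
        rw [Real.mul_rpow (by positivity) (by positivity), Real.inv_rpow hL0.le,
          Real.rpow_neg hL0.le]
    _ ≤ L ^ (-P) * (1 + M) := by gcongr; linarith
    _ = L ^ (-P) + L ^ (-P) * M := by ring
    _ ≤ _ := by gcongr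

/-- Lemma 3.3 of the paper: `‖η_{t,m} * f‖_{L^{p(·)}} ≤ C t^{-nϑ(t)} ‖f‖_{L^{p(·)/2}}` for a
globally log-Hölder exponent `p` (possibly unbounded) with `2 ≤ p⁻` and `p_∞ = ∞`,
where `ϑ(t) = 2/p⁻` for `0 < t ≤ 1` and `ϑ(t) = 0` for `t > 1`. -/
theorem statement1 (n : ℕ) (hn : 1 ≤ n) (m : ℝ) (hm : (n : ℝ) < m)
    (p : Esp n → ℝ) (hpmeas : Measurable p) (hp1 : ∀ x, 1 ≤ p x)
    (pm : ℝ) (hpm : pm = essInf p volume)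
    (hlog : IsLogHolder n p 0)
    (h2 : 2 ≤ pm) :
    ∃ C : ℝ, 0 < C ∧ ∀ t : ℝ, 0 < t → ∀ f : Esp n → ℝ,
      MemVLp n (fun x => p x / 2) f →
      luxNorm n p (convR n (etaKer n t m) f) ≤
        C * t ^ (-(n : ℝ) * (if t ≤ 1 then 2 / pm else 0)) *
        luxNorm n (fun x => p x / 2) f := by
  obtain ⟨c, hc, hloc, hdec⟩ := hlog
  have hn1 : (1 : ℝ) ≤ n := by exact_mod_cast hn
  have hm0 : 0 < m := by linarith
  have hppm : ∀ᵐ x, pm ≤ p x := by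
    rw [hpm]
    exact ae_essInf_le ⟨1, eventually_map.2 (ae_of_all _ hp1)⟩
  have hp2 : ∀ᵐ x, 2 ≤ p x := hppm.mono (fun x hx => h2.trans hx)
  set I := ∫ z : Esp n, (1 + ‖z‖) ^ (-m) with hI
  have hI0 : 0 ≤ I := integral_nonneg (fun z => by positivity)
  obtain ⟨s, hs1, hs0, hs2, hs3⟩ := exists_s m c I hc
  set L := Real.exp (c * s) with hL
  have hL1 : 1 ≤ L := Real.one_le_exp (by positivity)
  set D := (Real.exp (2 * c * n / ((m - n) / m)) + 1) * (I + 1) with hD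
  have hD0 : 0 < D := by positivity
  have hL0 : 0 < L := Real.exp_pos _
  refine ⟨D * L, by positivity, ?_⟩
  intro t ht f hf
  obtain ⟨hfm, lam0, hlam0⟩ := hf
  set T := t ^ (-(n : ℝ) * (if t ≤ 1 then 2 / pm else 0)) with hT
  have hT1 : 1 ≤ T := by
    rw [hT]
    split_ifs with h
    · apply Real.one_le_rpow_of_pos_of_le_one_of_nonpos ht h
      have : 0 ≤ (n : ℝ) * (2 / pm) := by positivity
      linarith
    · simp
  have hT0 : 0 < T := by linarith
  have hC : 0 < D * L * T := by positivity
  -- the main modular estimate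
  have main : ∀ lam : ℝ, 0 < lam → vMod n (fun x => p x / 2) (fun x => f x / lam) ≤ 1 →
      vMod n p (fun x => convR n (etaKer n t m) f x / (D * L * T * lam)) ≤ 1 := by
    intro lam hlam hmod
    set g : Esp n → ℝ := fun x => f x / lam with hg
    have hgm : AEMeasurable g volume := hfm.div_const lam
    have hgi : ∫⁻ y, ENNReal.ofReal (|g y| ^ (p y / 2)) ≤ 1 := by
      refine le_trans (le_of_eq ?_) hmod
      unfold vMod
      congr 1
      ext y
      rw [ENNReal.ofReal_rpow_of_nonneg (abs_nonneg _) (by have := hp1 y; linarith)]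
    have hconv : ∀ x, convR n (etaKer n t m) f x / (D * L * T * lam) =
        convR n (etaKer n t m) g x / (D * L * T) := by
      intro x
      have : convR n (etaKer n t m) g x = convR n (etaKer n t m) f x / lam := by
        unfold convR
        rw [← integral_div]
        congr 1
        ext y
        simp only [hg]
        ring
      rw [this, div_div, mul_comm lam]
    have hMle := avM_le n m t hm0 ht p g hgi
    have hMr : ∀ x, (avM n t m p g x).toReal ≤ t ^ (-(n : ℝ)) :=
      fun x => ENNReal.toReal_le_of_le_ofReal (by positivity) (hMle x)
    have hMtop : ∀ x, avM n t m p g x ≠ ⊤ :=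
      fun x => ne_top_of_le_ne_top ENNReal.ofReal_ne_top (hMle x)
    unfold vMod
    have hpt : ∀ᵐ x, ENNReal.ofReal |convR n (etaKer n t m) f x / (D * L * T * lam)| ^ p x ≤
        ENNReal.ofReal (L ^ (-(p x))) + ENNReal.ofReal L⁻¹ * avM n t m p g x := by
      filter_upwards [hppm] with x hx
      have hx2 : 2 ≤ p x := h2.trans hx
      have hcb := conv_bound n m t hn hm ht p g hpmeas hgm hp2 c hc hloc hgi x hx2
      rw [hconv x, ENNReal.ofReal_rpow_of_nonneg (abs_nonneg _) (by linarith),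
        ← ENNReal.ofReal_toReal (hMtop x), ← ENNReal.ofReal_mul (by positivity),
        ← ENNReal.ofReal_add (by positivity) (by positivity)]
      apply ENNReal.ofReal_le_ofReal
      rw [abs_div, abs_of_pos hC]
      have hM0 : 0 ≤ (avM n t m p g x).toReal := ENNReal.toReal_nonneg
      refine pt_final _ D L T (max 1 (avM n t m p g x).toReal) _ (p x) (abs_nonneg _) hD0 hL1 hT1
        (by positivity) (max_le (by linarith) (by linarith)) hM0 hx2 hcb ?_
      rw [hT]
      split_ifs with h
      · have h1 : 1 ≤ t ^ (-(n : ℝ)) :=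
          Real.one_le_rpow_of_pos_of_le_one_of_nonpos ht h (by linarith)
        calc (max 1 (avM n t m p g x).toReal) ^ (2 / p x) ≤ (t ^ (-(n : ℝ))) ^ (2 / p x) := by
              gcongr
              exact max_le h1 (hMr x)
          _ ≤ (t ^ (-(n : ℝ))) ^ (2 / pm) := by
              apply Real.rpow_le_rpow_of_exponent_le h1
              gcongr
          _ = _ := by rw [← Real.rpow_mul ht.le]
      · have h1 : (avM n t m p g x).toReal ≤ 1 := (hMr x).trans
          (Real.rpow_le_one_of_one_le_of_nonpos (le_of_not_ge h) (by linarith))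
        rw [max_eq_left h1]
        simp
    refine (lintegral_mono_ae hpt).trans ?_
    have hLm : Measurable (fun x => ENNReal.ofReal (L ^ (-(p x)))) := by fun_prop
    rw [lintegral_add_left hLm, lintegral_const_mul' _ _ ENNReal.ofReal_ne_top]
    have b1 := tail_bound n m hm p hp1 c hc hdec s hs1
    have b2 := avM_lint n m t hm ht p g hpmeas hgm hgi
    calc _ ≤ ENNReal.ofReal (Real.exp (m - s) * I) + ENNReal.ofReal L⁻¹ * ENNReal.ofReal I := by
          gcongr
      _ = ENNReal.ofReal (Real.exp (m - s) * I + Real.exp (-(c * s)) * I) := by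
          rw [← ENNReal.ofReal_mul (by positivity), ← ENNReal.ofReal_add (by positivity)
            (by positivity), hL, Real.exp_neg]
      _ ≤ 1 := by
          rw [ENNReal.ofReal_le_one]; linarith
  have hdiv : luxNorm n p (convR n (etaKer n t m) f) / (D * L * T) ≤
      luxNorm n (fun x => p x / 2) f := by
    apply le_csInf ⟨lam0, hlam0⟩
    rintro lam ⟨h1, h3⟩
    rw [div_le_iff₀' hC]
    exact csInf_le ⟨0, fun y hy => hy.1.le⟩ ⟨by positivity, main lam h1 h3⟩
  rwa [div_le_iff₀' hC] at hdiv
end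
end

section
/- Let n ≥ 1, m > n, let r, p : ℝ^n → [1,∞) be measurable exponents, and let ν be a constant with 1 ≤ ν ≤ r⁻. Define ω(τ) = (1/p⁻)(1 − ν/r⁺) for 0 < τ ≤ 1 and ω(τ) = (1/p⁺)(1 − ν/r⁻) for τ > 1 (with the conventions 1/p⁺ = 0 if p⁺ = ∞ and ν/r⁺ = 0 if r⁺ = ∞). Then there exists a constant C > 0 such that for every τ > 0 and every f ∈ L^{p(·)}(ℝ^n) ∩ L^ν(ℝ^n), ‖η_{τ,m} * f‖_{L^{r(·)}(ℝ^n)} ≤ C τ^{−nω(τ)} ‖f‖_{L^{p(·)}(ℝ^n)∩L^ν(ℝ^n)}. -/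
open MeasureTheory Filter Real
open scoped ENNReal

noncomputable section

lemma etaKer_nonneg' (n : ℕ) {t : ℝ} (m : ℝ) (ht : 0 < t) (x : Esp n) : 0 ≤ etaKer n t m x := by
  unfold etaKer; positivity

lemma etaKer_le' (n : ℕ) {t m : ℝ} (hm : 0 < m) (ht : 0 < t) (x : Esp n) :
    etaKer n t m x ≤ t ^ (-(n : ℝ)) := by
  unfold etaKer
  have h : (1 + ‖x‖ / t) ^ (-m) ≤ 1 := by
    apply Real.rpow_le_one_of_one_le_of_nonpos
    · have : 0 ≤ ‖x‖ / t := by positivity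
      linarith
    · linarith
  have : 0 ≤ t ^ (-(n : ℝ)) := by positivity
  nlinarith

lemma etaKer_meas (n : ℕ) (t m : ℝ) : Measurable (etaKer n t m) := by
  unfold etaKer; fun_prop

lemma etaKer_lint (n : ℕ) {t m : ℝ} (hm : (n : ℝ) < m) (ht : 0 < t) :
    ∫⁻ x, ENNReal.ofReal (etaKer n t m x) = ENNReal.ofReal (∫ x : Esp n, (1 + ‖x‖) ^ (-m)) := by
  have hint : Integrable (fun x : Esp n => (1 + ‖x‖) ^ (-m)) volume := by
    apply integrable_one_add_norm
    simpa using hm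
  have e : ∀ x, etaKer n t m x = t ^ (-(n : ℝ)) * (fun x : Esp n => (1 + ‖x‖) ^ (-m)) (t⁻¹ • x) := by
    intro x
    unfold etaKer
    simp only [norm_smul, norm_inv, Real.norm_eq_abs, abs_of_pos ht]
    rw [div_eq_inv_mul]
  have hint2 : Integrable (etaKer n t m) volume := by
    rw [funext e]
    exact (hint.comp_smul (inv_ne_zero ht.ne')).const_mul _
  rw [← ofReal_integral_eq_lintegral_ofReal hint2
    (Eventually.of_forall (fun x => etaKer_nonneg' n m ht x))]
  congr 1
  rw [funext e, integral_const_mul,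
    Measure.integral_comp_inv_smul volume (fun x : Esp n => (1 + ‖x‖) ^ (-m)) t]
  simp only [finrank_euclideanSpace, Fintype.card_fin, smul_eq_mul]
  rw [abs_of_pos (by positivity), ← mul_assoc, Real.rpow_neg ht.le, Real.rpow_natCast,
    inv_mul_cancel₀ (by positivity), one_mul]

/-- Pointwise Jensen. -/
lemma jensen_aux {α : Type*} [MeasurableSpace α] (μ : Measure α) (k F : α → ℝ≥0∞)
    (hk : Measurable k) (hF : Measurable F) (ν : ℝ) (hν : 1 ≤ ν) :
    (∫⁻ y, k y * F y ∂μ) ^ ν ≤ (∫⁻ y, k y ∂μ) ^ (ν - 1) * ∫⁻ y, k y * F y ^ ν ∂μ := by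
  have hν0 : 0 < ν := by linarith
  have h := eLpNorm'_le_eLpNorm'_mul_rpow_measure_univ (μ := μ.withDensity k) (f := F)
    (p := 1) (q := ν) one_pos hν hF.aestronglyMeasurable
  simp only [eLpNorm'_eq_lintegral_enorm, enorm_eq_self, ENNReal.rpow_one, div_one] at h
  rw [lintegral_withDensity_eq_lintegral_mul _ hk hF,
    lintegral_withDensity_eq_lintegral_mul _ hk (hF.pow_const ν),
    withDensity_apply _ MeasurableSet.univ] at h
  simp only [Pi.mul_apply, Measure.restrict_univ] at h
  have h2 := ENNReal.rpow_le_rpow h hν0.le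
  rw [ENNReal.mul_rpow_of_nonneg _ _ hν0.le, ← ENNReal.rpow_mul, ← ENNReal.rpow_mul,
    one_div_mul_cancel hν0.ne', ENNReal.rpow_one, sub_mul, one_mul,
    one_div_mul_cancel hν0.ne', mul_comm] at h2
  exact h2

lemma young_aux (n : ℕ) (k F : Esp n → ℝ≥0∞)
    (hk : Measurable k) (hF : Measurable F) (ν : ℝ) (hν : 1 ≤ ν) (hF1 : ∫⁻ y, F y ^ ν ≤ 1) :
    ∫⁻ x, (∫⁻ y, k (x - y) * F y) ^ ν ≤ (∫⁻ y, k y) ^ ν := by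
  have hshift : ∀ x : Esp n, ∫⁻ y, k (x - y) = ∫⁻ y, k y := fun x =>
    lintegral_sub_left_eq_self k x
  calc ∫⁻ x, (∫⁻ y, k (x - y) * F y) ^ ν
      ≤ ∫⁻ x, (∫⁻ y, k y) ^ (ν - 1) * ∫⁻ y, k (x - y) * F y ^ ν := by
        apply lintegral_mono
        intro x
        have := jensen_aux volume (fun y => k (x - y)) F (by fun_prop) hF ν hν
        rwa [hshift] at this
    _ = (∫⁻ y, k y) ^ (ν - 1) * ∫⁻ x, ∫⁻ y, k (x - y) * F y ^ ν := by
        rw [lintegral_const_mul]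
        apply Measurable.lintegral_prod_right'
          (f := fun z : Esp n × Esp n => k (z.1 - z.2) * F z.2 ^ ν)
        fun_prop
    _ = (∫⁻ y, k y) ^ (ν - 1) * ((∫⁻ y, k y) * ∫⁻ y, F y ^ ν) := by
        congr 1
        rw [lintegral_lintegral_swap (by fun_prop)]
        rw [← lintegral_const_mul _ (by fun_prop)]
        congr 1; ext y
        rw [lintegral_mul_const _ (by fun_prop), lintegral_sub_right_eq_self k y]
    _ ≤ (∫⁻ y, k y) ^ (ν - 1) * ((∫⁻ y, k y) * 1) := by gcongr
    _ = (∫⁻ y, k y) ^ ν := by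
        rw [mul_one]
        nth_rewrite 2 [← ENNReal.rpow_one (∫⁻ y, k y)]
        rw [← ENNReal.rpow_add_of_nonneg _ _ (by linarith) zero_le_one]
        congr 1; ring

lemma ptwise_aux (a : ℝ≥0∞) (s θ p : ℝ) (hs : 0 < s) (hp : 1 ≤ p) 
    (h : s ^ (-(θ * p)) ≤ s⁻¹) :
    a ≤ ENNReal.ofReal (s ^ θ) * (1 + ENNReal.ofReal s⁻¹ * a ^ p) := by
  have hK : 0 < s ^ θ := by positivity
  rcases eq_or_ne a ⊤ with rfl | ha
  · rw [ENNReal.top_rpow_of_pos (by linarith), ENNReal.mul_top, add_top, ENNReal.mul_top]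
    · simpa using hK
    · simpa using hs
  lift a to NNReal using ha
  obtain ⟨b, hb, e⟩ : ∃ b : ℝ, 0 ≤ b ∧ (a : ℝ≥0∞) = ENNReal.ofReal b :=
    ⟨a, a.2, ENNReal.ofReal_coe_nnreal.symm⟩
  rw [e, ENNReal.ofReal_rpow_of_nonneg hb (by linarith), ← ENNReal.ofReal_mul (by positivity),
    ← ENNReal.ofReal_one, ← ENNReal.ofReal_add zero_le_one (by positivity),
    ← ENNReal.ofReal_mul (by positivity)]
  apply ENNReal.ofReal_le_ofReal
  have h1 : b / s ^ θ ≤ 1 + (b / s ^ θ) ^ p := by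
    have h0 : 0 ≤ b / s ^ θ := by positivity
    rcases le_total (b / s ^ θ) 1 with h1 | h1
    · have : 0 ≤ (b / s ^ θ) ^ p := by positivity
      linarith
    · have := Real.self_le_rpow_of_one_le h1 hp
      linarith
  have h2 : (b / s ^ θ) ^ p ≤ s⁻¹ * b ^ p := by
    rw [Real.div_rpow hb hK.le, ← Real.rpow_mul hs.le, div_eq_mul_inv, ← Real.rpow_neg hs.le, mul_comm]
    gcongr
  have h3 := h1.trans (add_le_add_right h2 1)
  rwa [div_le_iff₀ hK, mul_comm] at h3

lemma sup_aux (n : ℕ) (k F : Esp n → ℝ≥0∞) (p : Esp n → ℝ)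
    (hk : Measurable k) (hF : Measurable F) (hpm : Measurable p) (hp1 : ∀ x, 1 ≤ p x)
    (s θ A : ℝ) (hs : 0 < s) (hA : 0 ≤ A)
    (hks : ∀ x, k x ≤ ENNReal.ofReal s) (hkA : ∫⁻ x, k x = ENNReal.ofReal A)
    (hF1 : ∫⁻ y, F y ^ p y ≤ 1)
    (h : ∀ᵐ y, s ^ (-(θ * p y)) ≤ s⁻¹) (x : Esp n) :
    ∫⁻ y, k (x - y) * F y ≤ ENNReal.ofReal ((A + 1) * s ^ θ) := by
  have hshift : ∀ x : Esp n, ∫⁻ y, k (x - y) = ∫⁻ y, k y := fun x =>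
    lintegral_sub_left_eq_self k x
  calc ∫⁻ y, k (x - y) * F y
      ≤ ∫⁻ y, ENNReal.ofReal (s ^ θ) * (k (x - y) + F y ^ p y) := by
        apply lintegral_mono_ae
        filter_upwards [h] with y hy
        calc k (x - y) * F y ≤ k (x - y) * 
              (ENNReal.ofReal (s ^ θ) * (1 + ENNReal.ofReal s⁻¹ * F y ^ p y)) := by
              gcongr
              exact ptwise_aux _ s θ _ hs (hp1 y) hy
          _ = ENNReal.ofReal (s ^ θ) * (k (x - y) + (k (x - y) * ENNReal.ofReal s⁻¹) * F y ^ p y) := by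
              ring
          _ ≤ ENNReal.ofReal (s ^ θ) * (k (x - y) + 1 * F y ^ p y) := by
              gcongr
              calc _ ≤ ENNReal.ofReal s * ENNReal.ofReal s⁻¹ := by gcongr; exact hks _
                _ = 1 := by
                  rw [← ENNReal.ofReal_mul hs.le, mul_inv_cancel₀ hs.ne', ENNReal.ofReal_one]
          _ = _ := by rw [one_mul]
    _ = ENNReal.ofReal (s ^ θ) * (ENNReal.ofReal A + ∫⁻ y, F y ^ p y) := by
        rw [lintegral_const_mul _ (by fun_prop), lintegral_add_left (by fun_prop), hshift, hkA]
    _ ≤ ENNReal.ofReal (s ^ θ) * (ENNReal.ofReal A + 1) := by gcongr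
    _ = _ := by
        rw [← ENNReal.ofReal_one, ← ENNReal.ofReal_add hA zero_le_one,
          ← ENNReal.ofReal_mul (by positivity), mul_comm]

/-- Interpolation: pointwise. `ir` stands for `1/R`. -/
lemma interp_aux (g C K ν ir r : ℝ) (hg : 0 ≤ g) (hC : 0 < C) (hK : 0 < K) (hν : 1 ≤ ν)
    (hr : ν ≤ r) (hgK : g ≤ C * K) (hexp : K ^ (ν * (r * ir - 1)) ≤ 1) :
    (g / (C * K ^ (1 - ν * ir))) ^ r ≤ (g / C) ^ ν := by
  have hu0 : 0 ≤ g / C := by positivity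
  have hu : g / C ≤ K := by rw [div_le_iff₀ hC]; linarith
  rw [← div_div, Real.div_rpow hu0 (by positivity), ← Real.rpow_mul hK.le,
    div_le_iff₀ (by positivity)]
  have e1 : (g / C) ^ r = (g / C) ^ ν * (g / C) ^ (r - ν) := by
    rw [← Real.rpow_add_of_nonneg hu0 (by linarith) (by linarith)]
    congr 1; ring
  have e2 : (g / C) ^ (r - ν) ≤ K ^ (r - ν) := Real.rpow_le_rpow hu0 hu (by linarith)
  have e3 : K ^ (r - ν) ≤ K ^ ((1 - ν * ir) * r) := by
    have : K ^ (r - ν) = K ^ ((1 - ν * ir) * r) * K ^ (ν * (r * ir - 1)) := by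
      rw [← Real.rpow_add hK]; congr 1; ring
    rw [this]
    exact mul_le_of_le_one_right (by positivity) hexp
  rw [e1]
  gcongr
  exact e2.trans e3

lemma essInf_le_ae (n : ℕ) (r : Esp n → ℝ) (hr1 : ∀ x, 1 ≤ r x) :
    (∀ᵐ x, essInf r volume ≤ r x) ∧ 1 ≤ essInf r volume := by
  have hc : IsCoboundedUnder (· ≥ ·) (ae (volume : Measure (Esp n))) r := by
    by_contra hcon
    have key : ∀ N : ℕ, ∀ᵐ x, (N : ℝ) ≤ r x := by
      intro N
      by_contra hN
      apply hcon
      refine ⟨N, fun a ha => ?_⟩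
      by_contra hlt
      apply hN
      rw [eventually_map] at ha
      filter_upwards [ha] with x hx
      simp only [ge_iff_le, not_le] at hlt hx ⊢
      linarith
    have : ∀ᵐ x : Esp n, False := by
      filter_upwards [ae_all_iff.2 key] with x hx
      obtain ⟨N, hN⟩ := exists_nat_gt (r x)
      linarith [hx N]
    obtain ⟨x, hx⟩ := this.exists
    exact hx
  have hb : IsBoundedUnder (· ≥ ·) (ae (volume : Measure (Esp n))) r :=
    ⟨1, by simpa using Eventually.of_forall hr1⟩
  refine ⟨ae_essInf_le hb, ?_⟩
  exact le_liminf_of_le hc (Eventually.of_forall hr1)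

lemma essSup_inv (n : ℕ) (r : Esp n → ℝ) (hr1 : ∀ x, 1 ≤ r x) :
    ∀ᵐ x, r x * (1 / essSup r volume) ≤ 1 := by
  by_cases hb : IsBoundedUnder (· ≤ ·) (ae (volume : Measure (Esp n))) r
  · filter_upwards [ae_le_essSup hb] with x hx
    have : 0 < essSup r volume := by linarith [hr1 x]
    rw [mul_one_div, div_le_one this]; exact hx
  · have : essSup r volume = 0 := by
      unfold essSup limsup limsSup
      rw [← Real.sInf_empty]
      congr 1
      rw [Set.eq_empty_iff_forall_notMem]
      intro a ha
      exact hb ⟨a, ha⟩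
    simp [this]

lemma vMod_of_gt (n : ℕ) (p f : Esp n → ℝ) (hp1 : ∀ x, 1 ≤ p x) (hf : MemVLp n p f) (lam : ℝ)
    (h : luxNorm n p f < lam) : 0 < lam ∧ vMod n p (fun x => f x / lam) ≤ 1 := by
  obtain ⟨l, ⟨hl0, hl⟩, hlt⟩ := exists_lt_of_csInf_lt hf.2 h
  refine ⟨hl0.trans hlt, le_trans ?_ hl⟩
  apply lintegral_mono
  intro x
  apply ENNReal.rpow_le_rpow _ (by linarith [hp1 x])
  apply ENNReal.ofReal_le_ofReal
  rw [abs_div, abs_div, abs_of_pos hl0, abs_of_pos (hl0.trans hlt)]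
  gcongr

/-- The normalised estimate. -/
lemma core_aux (n : ℕ) (m : ℝ) (hm : (n : ℝ) < m)
    (r p : Esp n → ℝ) (hpm : Measurable p) (hp1 : ∀ x, 1 ≤ p x)
    (ν : ℝ) (hν : 1 ≤ ν) (hr : ∀ᵐ x, ν ≤ r x) (τ : ℝ) (hτ : 0 < τ) (θ ir A : ℝ)
    (hA : A = ∫ x : Esp n, (1 + ‖x‖) ^ (-m))
    (h1 : ∀ᵐ y, (τ ^ (-(n : ℝ))) ^ (-(θ * p y)) ≤ (τ ^ (-(n : ℝ)))⁻¹)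
    (h2 : ∀ᵐ x, ((τ ^ (-(n : ℝ))) ^ θ) ^ (ν * (r x * ir - 1)) ≤ 1)
    (f : Esp n → ℝ) (hf : AEMeasurable f volume)
    (hfp : vMod n p f ≤ 1) (hfν : vMod n (fun _ => ν) f ≤ 1) :
    vMod n r (fun x => convR n (etaKer n τ m) f x /
      ((A + 1) * ((τ ^ (-(n : ℝ))) ^ θ) ^ (1 - ν * ir))) ≤ 1 := by
  have hA0 : 0 ≤ A := by
    rw [hA]; apply integral_nonneg; intro x; simp only [Pi.zero_apply]; positivity
  have hm0 : 0 < m := lt_of_le_of_lt (Nat.cast_nonneg n) hm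
  set s := τ ^ (-(n : ℝ)) with hs
  have hs0 : 0 < s := by positivity
  set F : Esp n → ℝ≥0∞ := fun x => ENNReal.ofReal |hf.mk f x| with hFdef
  have hF : Measurable F := by
    have := hf.measurable_mk
    rw [hFdef]
    exact ENNReal.measurable_ofReal.comp (measurable_norm.comp this)
  have hFf : ∀ᵐ x, ENNReal.ofReal |f x| = F x := by
    filter_upwards [hf.ae_eq_mk] with x hx
    simp only [hFdef]; rw [← hx]
  have hFp : ∫⁻ y, F y ^ p y ≤ 1 := by
    refine le_trans (le_of_eq (lintegral_congr_ae ?_)) hfp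
    filter_upwards [hFf] with x hx
    rw [hx]
  have hFν : ∫⁻ y, F y ^ ν ≤ 1 := by
    refine le_trans (le_of_eq (lintegral_congr_ae ?_)) hfν
    filter_upwards [hFf] with x hx
    rw [hx]
  set k : Esp n → ℝ≥0∞ := fun x => ENNReal.ofReal (etaKer n τ m x) with hkdef
  have hk : Measurable k := ENNReal.measurable_ofReal.comp (etaKer_meas n τ m)
  have hkA : ∫⁻ x, k x = ENNReal.ofReal A := by rw [hA]; exact etaKer_lint n hm hτ
  have hks : ∀ x, k x ≤ ENNReal.ofReal s := fun x =>
    ENNReal.ofReal_le_ofReal (etaKer_le' n hm0 hτ x)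
  have hsup := sup_aux n k F p hk hF hpm hp1 s θ A hs0 hA0 hks hkA hFp h1
  have hyoung := young_aux n k F hk hF ν hν hFν
  rw [hkA] at hyoung
  have hconv : ∀ x, ENNReal.ofReal |convR n (etaKer n τ m) f x| ≤ ∫⁻ y, k (x - y) * F y := by
    intro x
    rw [← Real.enorm_eq_ofReal_abs]
    refine (enorm_integral_le_lintegral_enorm _).trans (le_of_eq (lintegral_congr_ae ?_))
    filter_upwards [hFf] with y hy
    rw [enorm_mul, Real.enorm_eq_ofReal_abs (f y), hy, Real.enorm_of_nonneg (etaKer_nonneg' n m hτ _)]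
  set G := convR n (etaKer n τ m) f
  have hGb : ∀ x, |G x| ≤ (A + 1) * s ^ θ := fun x =>
    (ENNReal.ofReal_le_ofReal_iff (by positivity)).1 ((hconv x).trans (hsup x))
  have hC : 0 < A + 1 := by linarith
  calc vMod n r (fun x => G x / ((A + 1) * (s ^ θ) ^ (1 - ν * ir)))
      ≤ ∫⁻ x, ENNReal.ofReal ((A + 1) ^ ν)⁻¹ * (∫⁻ y, k (x - y) * F y) ^ ν := by
        apply lintegral_mono_ae
        filter_upwards [h2, hr] with x hx hrx
        have hi := interp_aux |G x| (A + 1) (s ^ θ) ν ir (r x) (abs_nonneg _) hC (by positivity)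
          hν hrx (hGb x) hx
        rw [abs_div, abs_of_pos (show 0 < (A + 1) * (s ^ θ) ^ (1 - ν * ir) by positivity),
          ENNReal.ofReal_rpow_of_nonneg (by positivity) (by linarith)]
        refine (ENNReal.ofReal_le_ofReal hi).trans ?_
        rw [Real.div_rpow (abs_nonneg _) hC.le, div_eq_inv_mul, ENNReal.ofReal_mul (by positivity),
          ← ENNReal.ofReal_rpow_of_nonneg (abs_nonneg _) (by linarith)]
        gcongr
        exact hconv x
    _ = ENNReal.ofReal ((A + 1) ^ ν)⁻¹ * ∫⁻ x, (∫⁻ y, k (x - y) * F y) ^ ν := by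
        rw [lintegral_const_mul' _ _ ENNReal.ofReal_ne_top]
    _ ≤ ENNReal.ofReal ((A + 1) ^ ν)⁻¹ * ENNReal.ofReal A ^ ν := by gcongr
    _ ≤ 1 := by
        rw [ENNReal.ofReal_rpow_of_nonneg hA0 (by linarith), ← ENNReal.ofReal_mul (by positivity)]
        rw [← ENNReal.ofReal_one]
        apply ENNReal.ofReal_le_ofReal
        rw [inv_mul_le_one₀ (by positivity)]
        gcongr
        linarith

/-- Theorem 3.9(3) of the paper: `‖η_{τ,m} * f‖_{L^{r(·)}} ≤ C τ^{-nω(τ)} ‖f‖_{L^{p(·)} ∩ L^ν}`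
for a constant `1 ≤ ν ≤ r⁻`. The conventions `1/p⁺ = 0` if `p⁺ = ∞` and `ν/r⁺ = 0` if
`r⁺ = ∞` match Lean's conventions (`essSup = 0` for essentially unbounded real-valued
exponents `≥ 1`, and division by `0` is `0`). -/
theorem statement7 (n : ℕ) (hn : 1 ≤ n) (m : ℝ) (hm : (n : ℝ) < m)
    (r pexp : Esp n → ℝ) (hrmeas : Measurable r) (hpmeas : Measurable pexp)
    (hr1 : ∀ x, 1 ≤ r x) (hp1 : ∀ x, 1 ≤ pexp x)
    (rm rp pm pp : ℝ)
    (hrm : rm = essInf r volume) (hrp : rp = essSup r volume)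
    (hpm : pm = essInf pexp volume) (hpp : pp = essSup pexp volume)
    (ν : ℝ) (hν1 : 1 ≤ ν) (hνrm : ν ≤ rm) :
    ∃ C : ℝ, 0 < C ∧ ∀ τ : ℝ, 0 < τ → ∀ f : Esp n → ℝ,
      MemVLp n pexp f → MemVLp n (fun _ => ν) f →
      luxNorm n r (convR n (etaKer n τ m) f) ≤
        C * τ ^ (-(n : ℝ) *
          (if τ ≤ 1 then (1 / pm) * (1 - ν / rp) else (1 / pp) * (1 - ν / rm))) *
        max (luxNorm n pexp f) (luxNorm n (fun _ => ν) f) := by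
  have hA0 : 0 ≤ ∫ x : Esp n, (1 + ‖x‖) ^ (-m) := by
    apply integral_nonneg; intro x; simp only [Pi.zero_apply]; positivity
  refine ⟨(∫ x : Esp n, (1 + ‖x‖) ^ (-m)) + 1, by linarith, ?_⟩
  intro τ hτ f hfp hfν
  obtain ⟨hrinf, hrm1⟩ := essInf_le_ae n r hr1
  obtain ⟨hpinf, hpm1⟩ := essInf_le_ae n pexp hp1
  have hrsup := essSup_inv n r hr1
  have hpsup := essSup_inv n pexp hp1
  rw [← hrm] at hrinf hrm1
  rw [← hpm] at hpinf hpm1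
  rw [← hrp] at hrsup
  rw [← hpp] at hpsup
  have hνr : ∀ᵐ x, ν ≤ r x := by
    filter_upwards [hrinf] with x hx using hνrm.trans hx
  have hpp0 : 0 ≤ pp := by
    rw [hpp]
    apply Real.sInf_nonneg
    intro a ha
    have ha' : ∀ᵐ x, pexp x ≤ a := ha
    obtain ⟨x, hx⟩ := ha'.exists
    linarith [hp1 x]
  have hs0 : 0 < τ ^ (-(n : ℝ)) := by positivity
  -- choice of the two parameters
  obtain ⟨θ, ir, hexp, h1, h2⟩ : ∃ θ ir : ℝ,
      (if τ ≤ 1 then (1 / pm) * (1 - ν / rp) else (1 / pp) * (1 - ν / rm)) = θ * (1 - ν * ir) ∧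
      (∀ᵐ y, (τ ^ (-(n : ℝ))) ^ (-(θ * pexp y)) ≤ (τ ^ (-(n : ℝ)))⁻¹) ∧
      (∀ᵐ x, ((τ ^ (-(n : ℝ))) ^ θ) ^ (ν * (r x * ir - 1)) ≤ 1) := by
    by_cases hτ1 : τ ≤ 1
    · have hs1 : 1 ≤ τ ^ (-(n : ℝ)) :=
        Real.one_le_rpow_of_pos_of_le_one_of_nonpos hτ hτ1 (by simp)
      refine ⟨1 / pm, 1 / rp, by rw [if_pos hτ1, mul_one_div], ?_, ?_⟩
      · filter_upwards [hpinf] with y hy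
        rw [← Real.rpow_neg_one]
        apply Real.rpow_le_rpow_of_exponent_le hs1
        have : 1 ≤ 1 / pm * pexp y := by
          rw [one_div_mul_eq_div, one_le_div (by linarith)]; exact hy
        linarith
      · filter_upwards [hrsup] with x hx
        apply Real.rpow_le_one_of_one_le_of_nonpos
        · exact Real.one_le_rpow hs1 (by positivity)
        · nlinarith
    · have hs1 : τ ^ (-(n : ℝ)) ≤ 1 :=
        Real.rpow_le_one_of_one_le_of_nonpos (not_le.1 hτ1).le (by simp)
      refine ⟨1 / pp, 1 / rm, by rw [if_neg hτ1, mul_one_div], ?_, ?_⟩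
      · filter_upwards [hpsup] with y hy
        rw [← Real.rpow_neg_one]
        apply Real.rpow_le_rpow_of_exponent_ge hs0 hs1
        linarith
      · filter_upwards [hrinf] with x hx
        have : 1 ≤ r x * (1 / rm) := by
          rw [mul_one_div, one_le_div (by linarith)]; exact hx
        apply Real.rpow_le_one (by positivity)
        · exact Real.rpow_le_one hs0.le hs1 (by positivity)
        · nlinarith
  rw [hexp, Real.rpow_mul hτ.le, Real.rpow_mul hs0.le]
  set A := ∫ x : Esp n, (1 + ‖x‖) ^ (-m) with hA
  set c := (A + 1) * ((τ ^ (-(n : ℝ))) ^ θ) ^ (1 - ν * ir) with hc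
  have hc0 : 0 < c := by positivity
  rw [← div_le_iff₀' hc0]
  apply le_of_forall_gt_imp_ge_of_dense
  intro lam hlam
  obtain ⟨hl0, hlp⟩ := vMod_of_gt n pexp f hp1 hfp lam ((le_max_left _ _).trans_lt hlam)
  obtain ⟨_, hlν⟩ := vMod_of_gt n (fun _ => ν) f (fun _ => hν1) hfν lam
    ((le_max_right _ _).trans_lt hlam)
  have key := core_aux n m hm r pexp hpmeas hp1 ν hν1 hνr τ hτ θ ir A hA h1 h2
    (fun x => f x / lam) (hfp.1.div_const lam) hlp hlν
  rw [div_le_iff₀' hc0]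
  apply csInf_le ⟨0, fun a ha => ha.1.le⟩
  refine ⟨by positivity, ?_⟩
  convert key using 2
  funext x
  have : convR n (etaKer n τ m) (fun x => f x / lam) x = convR n (etaKer n τ m) f x / lam := by
    unfold convR
    rw [← integral_div]
    congr 1; funext y; ring
  rw [this, ← hc, div_div, mul_comm c lam]
end
end

section
/- Let n ≥ 1 and let r, p : ℝ^n → [1,∞) be measurable exponents with p⁻ > 1 and r⁻ < ∞, and let q(x) = p(x)/(p(x)−1) be the pointwise conjugate of p, so that q⁺ = p⁻/(p⁻−1) < ∞. Suppose that the constant function 1 belongs to L^{s(·)}(ℝ^n), where the exponent s is defined by 1/s(x) := max{1/p⁻ − 1/p(x), 0} for all x ∈ ℝ^n. Then there exists a constant C > 0 such that for every k ∈ L^{q⁺}(ℝ^n) ∩ L^{r⁻}(ℝ^n) and every f ∈ L^{p(·)}(ℝ^n) ∩ L^1(ℝ^n), ‖k * f‖_{L^{r(·)}(ℝ^n)} ≤ C ‖k‖_{L^{q⁺}(ℝ^n)∩L^{r⁻}(ℝ^n)} · ‖f‖_{L^{p(·)}(ℝ^n)∩L^1(ℝ^n)}. -/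
open MeasureTheory Filter Real
open scoped ENNReal

noncomputable section

lemma aux_young_s8 (n : ℕ) (K F : Esp n → ℝ≥0∞) (hK : AEMeasurable K volume)
    (hF : AEMeasurable F volume) (ρ : ℝ) (hρ : 1 ≤ ρ) (h1 : ∫⁻ y, F y ≤ 1)
    (h2 : ∫⁻ y, K y ^ ρ ≤ 1) : ∫⁻ x, (∫⁻ y, K (x - y) * F y) ^ ρ ≤ 1 := by
  have hKs : ∀ x : Esp n, AEMeasurable (fun y => K (x - y)) volume := fun x =>
    hK.comp_quasiMeasurePreserving (Measure.measurePreserving_sub_left volume x).quasiMeasurePreserving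
  have key : ∀ x : Esp n, (∫⁻ y, K (x - y) * F y) ^ ρ ≤ ∫⁻ y, K (x - y) ^ ρ * F y := by
    intro x
    rcases eq_or_lt_of_le hρ with h | h
    · simp [← h]
    have hc := Real.HolderConjugate.conjExponent h
    set σ := Real.conjExponent ρ
    have hρ0 : 0 < ρ := by linarith
    have hsum : 1 / ρ + 1 / σ = 1 := by simpa using hc.inv_add_inv_eq_one
    have hσ0 : 0 < σ := hc.symm.pos
    have := ENNReal.lintegral_mul_le_Lp_mul_Lq volume hc
      (f := fun y => K (x - y) * F y ^ (1 / ρ)) (g := fun y => F y ^ (1 / σ))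
      ((hKs x).mul (hF.pow_const _)) (hF.pow_const _)
    have e1 : ∀ y, ((fun y => K (x - y) * F y ^ (1 / ρ)) * (fun y => F y ^ (1 / σ))) y
        = K (x - y) * F y := by
      intro y
      simp only [Pi.mul_apply]
      rw [mul_assoc, ← ENNReal.rpow_add_of_nonneg _ _ (by positivity) (by positivity), hsum,
        ENNReal.rpow_one]
    have e2 : ∀ y, (K (x - y) * F y ^ (1 / ρ)) ^ ρ = K (x - y) ^ ρ * F y := by
      intro y
      rw [ENNReal.mul_rpow_of_nonneg _ _ hρ0.le, ← ENNReal.rpow_mul, one_div_mul_cancel hρ0.ne',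
        ENNReal.rpow_one]
    have e3 : ∀ y, (F y ^ (1 / σ)) ^ σ = F y := by
      intro y
      rw [← ENNReal.rpow_mul, one_div_mul_cancel hσ0.ne', ENNReal.rpow_one]
    simp only [e1, e2, e3] at this
    have h3 : (∫⁻ y, F y) ^ (1 / σ) ≤ 1 := ENNReal.rpow_le_one h1 (by positivity)
    have h4 : ∫⁻ y, K (x - y) * F y ≤ (∫⁻ y, K (x - y) ^ ρ * F y) ^ (1 / ρ) :=
      this.trans (mul_le_of_le_one_right' h3)
    calc _ ≤ ((∫⁻ y, K (x - y) ^ ρ * F y) ^ (1 / ρ)) ^ ρ := ENNReal.rpow_le_rpow h4 hρ0.le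
      _ = _ := by rw [← ENNReal.rpow_mul, one_div_mul_cancel hρ0.ne', ENNReal.rpow_one]
  have hm : AEMeasurable (Function.uncurry fun x y : Esp n => K (x - y) ^ ρ * F y)
      (volume.prod volume) := by
    have a1 : AEMeasurable (fun z : Esp n × Esp n => K (z.1 - z.2)) (volume.prod volume) :=
      hK.comp_quasiMeasurePreserving (quasiMeasurePreserving_sub volume volume)
    have a2 : AEMeasurable (fun z : Esp n × Esp n => F z.2) (volume.prod volume) :=
      hF.comp_quasiMeasurePreserving Measure.quasiMeasurePreserving_snd
    exact (a1.pow_const ρ).mul a2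
  calc _ ≤ ∫⁻ x, ∫⁻ y, K (x - y) ^ ρ * F y := lintegral_mono key
    _ = ∫⁻ y, ∫⁻ x, K (x - y) ^ ρ * F y := lintegral_lintegral_swap hm
    _ = ∫⁻ y, (∫⁻ x, K x ^ ρ) * F y := by
      congr 1; ext y
      rw [lintegral_mul_const'']
      · rw [lintegral_sub_right_eq_self (fun x => K x ^ ρ) y]
      · exact (hK.comp_quasiMeasurePreserving
          (measurePreserving_sub_right volume y).quasiMeasurePreserving).pow_const ρ
    _ ≤ ∫⁻ y, F y := lintegral_mono fun y => mul_le_of_le_one_left' h2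
    _ ≤ 1 := h1

lemma aux_mono (n : ℕ) (p : Esp n → ℝ) (hp : ∀ x, 0 ≤ p x) (f : Esp n → ℝ)
    (hf : MemVLp n p f) (lam : ℝ) (h : luxNorm n p f < lam) :
    0 < lam ∧ vMod n p (fun x => f x / lam) ≤ 1 := by
  obtain ⟨m, ⟨hm0, hm1⟩, hlt⟩ := exists_lt_of_csInf_lt hf.2 h
  refine ⟨hm0.trans hlt, le_trans (lintegral_mono fun x => ?_) hm1⟩
  refine ENNReal.rpow_le_rpow (ENNReal.ofReal_le_ofReal ?_) (hp x)
  rw [abs_div, abs_div, abs_of_pos hm0, abs_of_pos (hm0.trans hlt)]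
  gcongr

lemma aux_ess (n : ℕ) (p : Esp n → ℝ) (hp : ∀ x, 1 ≤ p x) :
    (∀ᵐ x ∂(volume : Measure (Esp n)), essInf p volume ≤ p x) ∧ 1 ≤ essInf p volume := by
  have hco : IsCoboundedUnder (· ≥ ·) (ae (volume : Measure (Esp n))) p := by
    by_contra hcon
    have : ∀ N : ℕ, ∀ᵐ x ∂(volume : Measure (Esp n)), (N : ℝ) ≤ p x := by
      intro N
      by_contra h2
      apply hcon
      refine ⟨N, fun a ha => ?_⟩
      by_contra h3
      apply h2
      simp only [ge_iff_le, not_le] at h3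
      rw [eventually_map] at ha
      filter_upwards [ha] with x hx
      exact h3.le.trans hx
    obtain ⟨x, hx⟩ := (ae_all_iff.2 this).exists
    obtain ⟨N, hN⟩ := exists_nat_gt (p x)
    exact absurd (hx N) (not_le.2 hN)
  have hb : IsBoundedUnder (· ≥ ·) (ae (volume : Measure (Esp n))) p :=
    ⟨1, by rw [eventually_map]; exact Eventually.of_forall hp⟩
  exact ⟨ae_essInf_le hb, le_liminf_of_le hco (Eventually.of_forall hp)⟩

lemma aux_pt (a b : ℝ≥0∞) (m p : ℝ) (hm : 1 < m) (hp : m < p) :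
    (a * b) ^ m ≤ a ^ p + b ^ ((1 / m - 1 / p)⁻¹) := by
  have hm0 : 0 < m := by linarith
  have hp0 : 0 < p := by linarith
  have hd : 0 < p - m := by linarith
  have hes : (1 / m - 1 / p)⁻¹ = m * (p / (p - m)) := by
    field_simp
  have hc : (p / m).HolderConjugate (p / (p - m)) := by
    rw [Real.holderConjugate_iff]
    refine ⟨by rw [lt_div_iff₀ hm0]; linarith, ?_⟩
    field_simp; ring
  have := ENNReal.young_inequality (a ^ m) (b ^ m) hc
  rw [ENNReal.mul_rpow_of_nonneg _ _ hm0.le, hes]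
  refine this.trans ?_
  rw [← ENNReal.rpow_mul, ← ENNReal.rpow_mul, mul_div_cancel₀ _ hm0.ne']
  have d : ∀ (u : ℝ≥0∞) (t : ℝ), 1 ≤ t → u / ENNReal.ofReal t ≤ u := by
    intro u t ht
    refine ENNReal.div_le_of_le_mul (le_mul_of_one_le_right' ?_)
    simpa using ht
  exact add_le_add (d _ _ hc.lt.le) (d _ _ hc.symm.lt.le)

lemma aux_emb (n : ℕ) (p : Esp n → ℝ) (hpmeas : Measurable p) (m : ℝ) (hm : 1 < m)
    (hle : ∀ᵐ x ∂(volume : Measure (Esp n)), m ≤ p x) (F : Esp n → ℝ≥0∞)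
    (hF : AEMeasurable F volume) (L : ℝ≥0∞) (hL : L ≤ 1)
    (h1 : ∫⁻ x, F x ^ p x ≤ 1)
    (h2 : ∫⁻ x in {x : Esp n | m < p x}, L ^ ((1 / m - 1 / p x)⁻¹) ≤ 1) :
    ∫⁻ x, (F x * L) ^ m ≤ 2 := by
  have hS : MeasurableSet {x : Esp n | m < p x} := measurableSet_lt measurable_const hpmeas
  calc _ ≤ ∫⁻ x, (F x ^ p x +
        {x : Esp n | m < p x}.indicator (fun x => L ^ ((1 / m - 1 / p x)⁻¹)) x) := by
        refine lintegral_mono_ae ?_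
        filter_upwards [hle] with x hx
        rcases eq_or_lt_of_le hx with h | h
        · refine le_trans ?_ (le_add_of_nonneg_right zero_le)
          rw [← h]
          exact ENNReal.rpow_le_rpow (mul_le_of_le_one_right' hL) (by linarith)
        · rw [Set.indicator_of_mem (by exact h)]
          exact aux_pt _ _ _ _ hm h
    _ = (∫⁻ x, F x ^ p x) + ∫⁻ x in {x : Esp n | m < p x}, L ^ ((1 / m - 1 / p x)⁻¹) := by
        rw [lintegral_add_left' (hF.pow hpmeas.aemeasurable), lintegral_indicator hS]
    _ ≤ 1 + 1 := add_le_add h1 h2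
    _ = 2 := by norm_num

lemma aux_holder_s8 (n : ℕ) (m : ℝ) (hm : 1 < m) (K F : Esp n → ℝ≥0∞)
    (hK : AEMeasurable K volume) (hF : AEMeasurable F volume) (L : ℝ≥0∞)
    (h1 : ∫⁻ x, (F x * L) ^ m ≤ 2) (h2 : ∫⁻ x, K x ^ (m / (m - 1)) ≤ 1) (x : Esp n) :
    (∫⁻ y, K (x - y) * F y) * L ≤ 2 := by
  have hKs : AEMeasurable (fun y => K (x - y)) volume :=
    hK.comp_quasiMeasurePreserving (Measure.measurePreserving_sub_left volume x).quasiMeasurePreserving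
  have hc : (m / (m - 1)).HolderConjugate m := (Real.HolderConjugate.conjExponent hm).symm
  have := ENNReal.lintegral_mul_le_Lp_mul_Lq volume hc hKs (hF.mul_const L)
  rw [lintegral_sub_left_eq_self (fun y => K y ^ (m / (m - 1))) x] at this
  calc _ = ∫⁻ y, ((fun y => K (x - y)) * fun y => F y * L) y := by
        rw [← lintegral_mul_const'' _ (show AEMeasurable (fun y => K (x - y) * F y) volume from hKs.mul hF)]
        simp [mul_assoc]
    _ ≤ _ := this
    _ ≤ 1 * 2 ^ (1 / m) := by
        refine mul_le_mul' (ENNReal.rpow_le_one h2 hc.one_div_nonneg) 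
          (ENNReal.rpow_le_rpow h1 (by positivity))
    _ ≤ 1 * 2 ^ (1 : ℝ) := by
        gcongr
        · norm_num
        · rw [div_le_one (by linarith)]; exact hm.le
    _ = 2 := by simp

/-- Theorem 3.9(4) of the paper: if `1 ∈ L^{s(·)}` where `1/s(x) = max(1/p⁻ - 1/p(x), 0)`,
then `‖k * f‖_{L^{r(·)}} ≤ C ‖k‖_{L^{q⁺} ∩ L^{r⁻}} ‖f‖_{L^{p(·)} ∩ L^1}`, where
`q⁺ = p⁻/(p⁻-1)` is the supremum of the conjugate exponent of `p`.
The hypothesis `1 ∈ L^{s(·)}` is encoded through the variable exponent modular of the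
constant function `1/lam`: on the set where `s(x) = ∞` (i.e. `p(x) = p⁻`) the modular
contributes `0` since `lam ≥ 1`, and elsewhere `s(x) = (1/p⁻ - 1/p(x))⁻¹`. -/
theorem statement8 (n : ℕ) (hn : 1 ≤ n)
    (r pexp : Esp n → ℝ) (hrmeas : Measurable r) (hpmeas : Measurable pexp)
    (hr1 : ∀ x, 1 ≤ r x) (hp1 : ∀ x, 1 ≤ pexp x)
    (rm pm : ℝ) (hrm : rm = essInf r volume) (hpm : pm = essInf pexp volume)
    (hpm1 : 1 < pm)
    (hs : ∃ lam : ℝ, 1 ≤ lam ∧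
      ∫⁻ x in {x : Esp n | pm < pexp x},
        (ENNReal.ofReal (1 / lam)) ^ ((1 / pm - 1 / pexp x)⁻¹) ∂volume ≤ 1) :
    ∃ C : ℝ, 0 < C ∧ ∀ k f : Esp n → ℝ,
      MemVLp n (fun _ => pm / (pm - 1)) k → MemVLp n (fun _ => rm) k →
      MemVLp n pexp f → MemVLp n (fun _ => (1 : ℝ)) f →
      luxNorm n r (convR n k f) ≤
        C * max (luxNorm n (fun _ => pm / (pm - 1)) k) (luxNorm n (fun _ => rm) k) *
          max (luxNorm n pexp f) (luxNorm n (fun _ => (1 : ℝ)) f) := by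
  obtain ⟨lam, hlam, hs⟩ := hs
  have hlam0 : 0 < lam := by linarith
  obtain ⟨hrle, hrm1⟩ := aux_ess n r hr1
  obtain ⟨hple, -⟩ := aux_ess n pexp hp1
  rw [← hrm] at hrle hrm1
  rw [← hpm] at hple
  refine ⟨2 * lam, by positivity, fun k f hk1 hk2 hf1 hf2 => ?_⟩
  set a := max (luxNorm n (fun _ => pm / (pm - 1)) k) (luxNorm n (fun _ => rm) k)
  set b := max (luxNorm n pexp f) (luxNorm n (fun _ => (1 : ℝ)) f)
  have main : ∀ lk lf : ℝ, a < lk → b < lf →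
      luxNorm n r (convR n k f) ≤ 2 * lam * lk * lf := by
    intro lk lf hlk hlf
    have hq0 : 0 ≤ pm / (pm - 1) := div_nonneg (by linarith) (by linarith)
    obtain ⟨hlk0, mk1⟩ := aux_mono n _ (fun _ => hq0) k hk1 lk ((le_max_left _ _).trans_lt hlk)
    obtain ⟨-, mk2⟩ := aux_mono n _ (fun _ => by linarith) k hk2 lk
      ((le_max_right _ _).trans_lt hlk)
    obtain ⟨hlf0, mf1⟩ := aux_mono n _ (fun x => by linarith [hp1 x]) f hf1 lf
      ((le_max_left _ _).trans_lt hlf)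
    obtain ⟨-, mf2⟩ := aux_mono n _ (fun _ => by norm_num) f hf2 lf
      ((le_max_right _ _).trans_lt hlf)
    unfold vMod at mk1 mk2 mf1 mf2
    set K : Esp n → ℝ≥0∞ := fun x => ENNReal.ofReal |k x / lk| with hKdef
    set F : Esp n → ℝ≥0∞ := fun x => ENNReal.ofReal |f x / lf| with hFdef
    have hK : AEMeasurable K volume :=
      (continuous_abs.measurable.comp_aemeasurable (hk1.1.div_const lk)).ennreal_ofReal
    have hF : AEMeasurable F volume :=
      (continuous_abs.measurable.comp_aemeasurable (hf1.1.div_const lf)).ennreal_ofReal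
    have hL : ENNReal.ofReal (1 / lam) ≤ 1 := by
      rw [ENNReal.ofReal_le_one, div_le_one hlam0]; exact hlam
    have hemb := aux_emb n pexp hpmeas pm hpm1 hple F hF _ hL mf1 hs
    have hhol := aux_holder_s8 n pm hpm1 K F hK hF _ hemb mk1
    have hyou := aux_young_s8 n K F hK hF rm hrm1 (by simpa using mf2) mk2
    have hpt : ∀ x, ENNReal.ofReal |convR n k f x / (2 * lam * lk * lf)| ≤
        (∫⁻ y, K (x - y) * F y) * ENNReal.ofReal (1 / lam) / 2 := by
      intro x
      have e1 : convR n k f x / (2 * lam * lk * lf) =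
          (∫ y, (k (x - y) / lk) * (f y / lf)) * (1 / lam) / 2 := by
        have : ∀ y, (k (x - y) / lk) * (f y / lf) = (k (x - y) * f y) * (1 / (lk * lf)) := by
          intro y; field_simp
        simp only [this, integral_mul_const]
        unfold convR
        field_simp
      rw [e1, abs_div, abs_mul, abs_of_pos (by norm_num : (0 : ℝ) < 2),
        abs_of_pos (by positivity : 0 < 1 / lam), ENNReal.ofReal_div_of_pos (by norm_num),
        ENNReal.ofReal_mul (abs_nonneg _), ENNReal.ofReal_ofNat]
      gcongr
      rw [← Real.enorm_eq_ofReal_abs]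
      refine (enorm_integral_le_lintegral_enorm _).trans (lintegral_mono fun y => ?_)
      simp only [hKdef, hFdef]
      rw [enorm_mul, Real.enorm_eq_ofReal_abs, Real.enorm_eq_ofReal_abs]
    refine csInf_le ⟨0, fun _ h => h.1.le⟩ ⟨by positivity, ?_⟩
    refine le_trans (lintegral_mono_ae ?_) hyou
    filter_upwards [hrle] with x hx
    have hle1 : (∫⁻ y, K (x - y) * F y) * ENNReal.ofReal (1 / lam) / 2 ≤ 1 :=
      ENNReal.div_le_of_le_mul (by simpa using hhol x)
    calc _ ≤ _ := ENNReal.rpow_le_rpow (hpt x) (by linarith [hr1 x])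
      _ ≤ _ := ENNReal.rpow_le_rpow_of_exponent_ge hle1 hx
      _ ≤ _ := by
        refine ENNReal.rpow_le_rpow ?_ (by linarith)
        refine (ENNReal.div_le_of_le_mul (le_mul_of_one_le_right' (by norm_num))).trans
          (mul_le_of_le_one_right' hL)
  have hcont : Tendsto (fun e : ℝ => 2 * lam * (a + e) * (b + e)) (nhdsWithin 0 (Set.Ioi 0))
      (nhds (2 * lam * a * b)) := by
    have : Continuous (fun e : ℝ => 2 * lam * (a + e) * (b + e)) := by fun_prop
    simpa using (this.tendsto 0).mono_left nhdsWithin_le_nhds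
  refine ge_of_tendsto hcont ?_
  filter_upwards [self_mem_nhdsWithin] with e he
  have he : 0 < e := he
  exact main _ _ (by linarith) (by linarith)
end
end
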